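/- arXiv:1509.02251 — 3 statements merged into one kernel-verified Lean document; each statement's English description precedes it below -/
import Mathlib

section
/- Let χ_h be the top (normalized, non-negative) eigenfunction of L_h = π_h (dQ_{log d}) π_h with eigenvalue λ_h > 0. Then for every k ≥ 0, ‖χ_h‖_{L^{q_k}(ν)} ≤ (d/λ_h)^k, where q_k = 1 + d^{2k}. -/
open MeasureTheory ProbabilityTheory

open scoped ENNReal

theorem ringChoose_succ (a : ℝ) (n : ℕ) :
    Ring.choose a (n + 1) = Ring.choose a n * ((a - n) / (n + 1)) := by
  rw [Ring.choose_eq_smul, Ring.choose_eq_smul, descPochhammer_succ_right,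
    Polynomial.smeval_mul, Nat.factorial_succ]
  simp only [Polynomial.smeval_sub, Polynomial.smeval_X, Polynomial.smeval_natCast, smul_eq_mul]
  push_cast
  have : (n.factorial : ℝ) ≠ 0 := by positivity
  field_simp
  simp

theorem ringChoose_two_mul_add_two (a : ℝ) (n : ℕ) :
    Ring.choose a (2 * (n + 1)) =
      Ring.choose a (2 * n) * ((2 * n - a) * (2 * n + 1 - a) / ((2 * n + 1) * (2 * n + 2))) := by
  rw [show 2 * (n + 1) = 2 * n + 1 + 1 by ring, ringChoose_succ, ringChoose_succ]
  push_cast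
  field_simp
  ring

theorem hasSum_one_add_rpow (a : ℝ) {x : ℝ} (hx : |x| < 1) :
    HasSum (fun n ↦ Ring.choose a n * x ^ n) ((1 + x) ^ a) := by
  have h := (Real.one_add_rpow_hasFPowerSeriesOnBall_zero (a := a)).hasSum (y := x)
    (by simpa [enorm_eq_nnnorm, ← NNReal.coe_lt_one] using hx)
  simpa [binomialSeries, FormalMultilinearSeries.coeff_ofScalars, mul_comm] using h

theorem hasSum_symm_one_add_rpow (a : ℝ) {x : ℝ} (hx : |x| < 1) :
    HasSum (fun n ↦ Ring.choose a (2 * n) * x ^ (2 * n)) (((1 + x) ^ a + (1 - x) ^ a) / 2) := by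
  have h := ((hasSum_one_add_rpow a hx).add
    (hasSum_one_add_rpow a (x := -x) (by simpa using hx))).div_const 2
  rw [← sub_eq_add_neg] at h
  refine (((mul_right_injective₀ (two_ne_zero' ℕ)).hasSum_iff ?_).2 h).congr_fun ?_
  · intro n hn
    have : Odd n := by
      rw [← Nat.not_even_iff_odd]
      rintro ⟨m, rfl⟩
      exact hn ⟨m, by simp; ring⟩
    simp [this.neg_pow]
  · intro n
    simp

theorem ringChoose_two_mul_le {r s ρ : ℝ} (hs : 1 < s) (hsr : s ≤ r) (hr : r ≤ 2)
    (hρ : ρ ^ 2 * (r - 1) = s - 1) (hρ1 : ρ ^ 2 ≤ 1) (n : ℕ) :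
    0 ≤ Ring.choose r (2 * (n + 1)) ∧
      s * (Ring.choose r (2 * (n + 1)) * ρ ^ (2 * (n + 1))) ≤ r * Ring.choose s (2 * (n + 1)) := by
  induction n with
  | zero =>
    rw [ringChoose_two_mul_add_two, ringChoose_two_mul_add_two]
    simp only [mul_zero, Ring.choose_zero_right, Nat.cast_zero]
    constructor
    · have : 0 ≤ r * (r - 1) := mul_nonneg (by linarith) (by linarith)
      linarith
    · apply le_of_eq
      simp only [zero_add, mul_one, zero_sub, one_mul]
      linear_combination s * r / 2 * hρ
  | succ n ih =>
    rw [ringChoose_two_mul_add_two r (n + 1), ringChoose_two_mul_add_two s (n + 1)]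
    obtain ⟨h0, h1⟩ := ih
    set m : ℝ := ((n + 1 : ℕ) : ℝ) with hm
    have hm1 : 1 ≤ m := by rw [hm]; push_cast; linarith [(Nat.cast_nonneg n : (0 : ℝ) ≤ n)]
    have hk0 : 0 ≤ (2 * m - r) * (2 * m + 1 - r) / ((2 * m + 1) * (2 * m + 2)) := by
      apply div_nonneg (mul_nonneg _ _) <;> nlinarith
    have hk : (2 * m - r) * (2 * m + 1 - r) / ((2 * m + 1) * (2 * m + 2)) ≤
        (2 * m - s) * (2 * m + 1 - s) / ((2 * m + 1) * (2 * m + 2)) := by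
      gcongr <;> nlinarith
    refine ⟨mul_nonneg h0 hk0, ?_⟩
    have hC : 0 ≤ s * (Ring.choose r (2 * (n + 1)) * ρ ^ (2 * (n + 1))) := by
      have : 0 ≤ ρ ^ (2 * (n + 1)) := by rw [pow_mul]; positivity
      have : 0 < s := by linarith
      positivity
    calc _ = s * (Ring.choose r (2 * (n + 1)) * ρ ^ (2 * (n + 1))) * ρ ^ 2 *
          ((2 * m - r) * (2 * m + 1 - r) / ((2 * m + 1) * (2 * m + 2))) := by ring
      _ ≤ s * (Ring.choose r (2 * (n + 1)) * ρ ^ (2 * (n + 1))) * 1 *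
          ((2 * m - s) * (2 * m + 1 - s) / ((2 * m + 1) * (2 * m + 2))) := by gcongr
      _ ≤ r * Ring.choose s (2 * (n + 1)) *
          ((2 * m - s) * (2 * m + 1 - s) / ((2 * m + 1) * (2 * m + 2))) := by
        rw [mul_one]
        gcongr
        exact hk0.trans hk
      _ = _ := by ring

theorem two_point_hypercontractive_one {r s ρ x : ℝ} (hs : 1 < s) (hsr : s ≤ r) (hr : r ≤ 2)
    (hρ : ρ ^ 2 * (r - 1) = s - 1) (hρ1 : ρ ^ 2 ≤ 1) (hx : |x| < 1) :
    ((1 + ρ * x) ^ r + (1 - ρ * x) ^ r) / 2 ≤ (((1 + x) ^ s + (1 - x) ^ s) / 2) ^ (r / s) := by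
  have hs0 : 0 < s := by linarith
  have hρx : |ρ * x| < 1 := by
    rw [abs_mul]
    have : |ρ| ≤ 1 := by rwa [sq_le_one_iff_abs_le_one] at hρ1
    nlinarith [abs_nonneg x, abs_nonneg ρ]
  have hR := hasSum_symm_one_add_rpow r hρx
  have hS := hasSum_symm_one_add_rpow s hx
  rw [← hasSum_nat_add_iff' 1] at hR hS
  simp only [Finset.range_one, Finset.sum_singleton, mul_zero, Ring.choose_zero_right, pow_zero,
    mul_one] at hR hS
  have hle := hasSum_le (fun n ↦ ?_) hR (hS.mul_left (r / s))
  · have hB := one_add_mul_self_le_rpow_one_add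
      (s := ((1 + x) ^ s + (1 - x) ^ s) / 2 - 1) (p := r / s) ?_ ((one_le_div hs0).2 hsr)
    · rw [add_sub_cancel] at hB
      linarith
    · obtain ⟨h1, h2⟩ := abs_lt.1 hx
      have := Real.rpow_nonneg (show 0 ≤ 1 + x by linarith) s
      have := Real.rpow_nonneg (show 0 ≤ 1 - x by linarith) s
      linarith
  · have h := (ringChoose_two_mul_le hs hsr hr hρ hρ1 n).2
    have hx0 : 0 ≤ x ^ (2 * (n + 1)) := by rw [pow_mul]; positivity
    rw [mul_pow, div_mul_eq_mul_div, le_div_iff₀ hs0]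
    calc _ = s * (Ring.choose r (2 * (n + 1)) * ρ ^ (2 * (n + 1))) * x ^ (2 * (n + 1)) := by ring
      _ ≤ r * Ring.choose s (2 * (n + 1)) * x ^ (2 * (n + 1)) := by gcongr
      _ = _ := by ring

theorem two_point_hypercontractive_of_lt {r s ρ a b : ℝ} (hs : 1 < s) (hsr : s ≤ r) (hr : r ≤ 2)
    (hρ : ρ ^ 2 * (r - 1) = s - 1) (hρ1 : ρ ^ 2 ≤ 1) (hab : |b| < a) :
    ((a + ρ * b) ^ r + (a - ρ * b) ^ r) / 2 ≤ (((a + b) ^ s + (a - b) ^ s) / 2) ^ (r / s) := by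
  have ha : 0 < a := (abs_nonneg b).trans_lt hab
  have hx : |b / a| < 1 := by rwa [abs_div, abs_of_pos ha, div_lt_one ha]
  have hs0 : 0 < s := by linarith
  have h := two_point_hypercontractive_one hs hsr hr hρ hρ1 hx
  have hρx : |ρ * (b / a)| < 1 := by
    rw [abs_mul]
    have : |ρ| ≤ 1 := by rwa [sq_le_one_iff_abs_le_one] at hρ1
    nlinarith [abs_nonneg (b / a), abs_nonneg ρ]
  rw [abs_lt] at hx hρx
  have e (t : ℝ) : a * (1 + t * (b / a)) = a + t * b := by field_simp
  have e1 : a + b = a * (1 + b / a) := by field_simp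
  have e2 : a - b = a * (1 - b / a) := by field_simp
  have e3 : a + ρ * b = a * (1 + ρ * (b / a)) := by field_simp
  have e4 : a - ρ * b = a * (1 - ρ * (b / a)) := by field_simp
  rw [e1, e2, e3, e4, Real.mul_rpow ha.le (by linarith), Real.mul_rpow ha.le (by linarith),
    Real.mul_rpow ha.le (by linarith), Real.mul_rpow ha.le (by linarith), ← mul_add, ← mul_add,
    mul_div_assoc, mul_div_assoc, Real.mul_rpow (by positivity), ← Real.rpow_mul ha.le,
    mul_div_cancel₀ _ hs0.ne']
  · gcongr
  · have := Real.rpow_nonneg (show 0 ≤ 1 + b / a by linarith) s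
    have := Real.rpow_nonneg (show 0 ≤ 1 - b / a by linarith) s
    linarith

theorem two_point_hypercontractive {r s ρ a b : ℝ} (hs : 1 < s) (hsr : s ≤ r) (hr : r ≤ 2)
    (hρ : ρ ^ 2 * (r - 1) = s - 1) (hρ1 : ρ ^ 2 ≤ 1) (hab : |b| ≤ a) :
    ((a + ρ * b) ^ r + (a - ρ * b) ^ r) / 2 ≤ (((a + b) ^ s + (a - b) ^ s) / 2) ^ (r / s) := by
  have hs0 : 0 ≤ s := by linarith
  have hr0 : 0 ≤ r := by linarith
  have hrs : 0 ≤ r / s := by positivity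
  have c1 : Continuous fun a : ℝ ↦ ((a + ρ * b) ^ r + (a - ρ * b) ^ r) / 2 := by
    fun_prop (disch := assumption)
  have c2 : Continuous fun a : ℝ ↦ (((a + b) ^ s + (a - b) ^ s) / 2) ^ (r / s) := by
    fun_prop (disch := assumption)
  refine le_of_tendsto_of_tendsto (c1.continuousWithinAt (s := Set.Ioi a) (x := a))
    (c2.continuousWithinAt (s := Set.Ioi a) (x := a)) ?_
  filter_upwards [self_mem_nhdsWithin] with a' ha'
  exact two_point_hypercontractive_of_lt hs hsr hr hρ hρ1 (hab.trans_lt ha')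

theorem two_point_bilinear {p r s ρ : ℝ} (hpr : p.HolderConjugate r) (hs : 1 < s) (hsr : s ≤ r)
    (hr : r ≤ 2) (hρ : ρ ^ 2 * (r - 1) = s - 1) (hρ0 : 0 ≤ ρ) (hρ1 : ρ ≤ 1) {f₁ f₂ g₁ g₂ : ℝ}
    (hf₁ : 0 ≤ f₁) (hf₂ : 0 ≤ f₂) (hg₁ : 0 ≤ g₁) (hg₂ : 0 ≤ g₂) :
    (1 + ρ) / 4 * (g₁ * f₁ + g₂ * f₂) + (1 - ρ) / 4 * (g₁ * f₂ + g₂ * f₁) ≤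
      ((g₁ ^ s + g₂ ^ s) / 2) ^ (1 / s) * ((f₁ ^ p + f₂ ^ p) / 2) ^ (1 / p) := by
  have hp0 : 0 < p := hpr.pos
  have hr0 : 0 < r := hpr.symm.pos
  set a := (g₁ + g₂) / 2 with ha
  set b := (g₁ - g₂) / 2 with hb
  have hab : |b| ≤ a := by rw [abs_le]; constructor <;> linarith
  have hρb : |ρ * b| ≤ a := by
    rw [abs_mul, abs_of_nonneg hρ0]
    nlinarith [abs_nonneg b]
  rw [abs_le] at hρb
  have h2 := two_point_hypercontractive hs hsr hr hρ (by nlinarith) hab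
  rw [show a + b = g₁ by ring, show a - b = g₂ by ring] at h2
  have hH := Real.inner_le_Lp_mul_Lq_of_nonneg (Finset.univ : Finset (Fin 2))
    (f := ![a + ρ * b, a - ρ * b]) (g := ![f₁, f₂]) hpr.symm
    (by intro i _; fin_cases i <;> simp <;> linarith)
    (by intro i _; fin_cases i <;> simp <;> linarith)
  simp only [Fin.sum_univ_two, Matrix.cons_val_zero, Matrix.cons_val_one] at hH
  have hA : 0 ≤ (a + ρ * b) ^ r + (a - ρ * b) ^ r :=
    add_nonneg (Real.rpow_nonneg (by linarith) _) (Real.rpow_nonneg (by linarith) _)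
  have hF : 0 ≤ f₁ ^ p + f₂ ^ p := by positivity
  have hG : 0 ≤ (g₁ ^ s + g₂ ^ s) / 2 := by positivity
  calc _ = ((a + ρ * b) * f₁ + (a - ρ * b) * f₂) / 2 := by rw [ha, hb]; ring
    _ ≤ ((a + ρ * b) ^ r + (a - ρ * b) ^ r) ^ (1 / r) * (f₁ ^ p + f₂ ^ p) ^ (1 / p) / 2 := by
      gcongr
    _ = (((a + ρ * b) ^ r + (a - ρ * b) ^ r) / 2) ^ (1 / r) *
        ((f₁ ^ p + f₂ ^ p) / 2) ^ (1 / p) := by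
      rw [Real.div_rpow hA (by norm_num), Real.div_rpow hF (by norm_num), div_mul_div_comm,
        ← Real.rpow_add (by norm_num)]
      congr 1
      rw [one_div, one_div, add_comm, hpr.inv_add_inv_eq_one, Real.rpow_one]
    _ ≤ ((((g₁ ^ s + g₂ ^ s) / 2)) ^ (r / s)) ^ (1 / r) * ((f₁ ^ p + f₂ ^ p) / 2) ^ (1 / p) := by
      gcongr
    _ = _ := by
      rw [← Real.rpow_mul hG]
      congr 2
      field_simp

theorem two_point_bilinear_ennreal {p r s ρ : ℝ} (hpr : p.HolderConjugate r) (hs : 1 < s)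
    (hsr : s ≤ r) (hr : r ≤ 2) (hρ : ρ ^ 2 * (r - 1) = s - 1) (hρ0 : 0 ≤ ρ) (hρ1 : ρ ≤ 1)
    (F₁ F₂ G₁ G₂ : ℝ≥0∞) :
    ENNReal.ofReal ((1 + ρ) / 4) * (G₁ ^ (1 / s) * F₁ ^ (1 / p) + G₂ ^ (1 / s) * F₂ ^ (1 / p)) +
      ENNReal.ofReal ((1 - ρ) / 4) * (G₁ ^ (1 / s) * F₂ ^ (1 / p) + G₂ ^ (1 / s) * F₁ ^ (1 / p)) ≤
      (2⁻¹ * (G₁ + G₂)) ^ (1 / s) * (2⁻¹ * (F₁ + F₂)) ^ (1 / p) := by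
  have hp0 : 0 < p := hpr.pos
  have hs0 : 0 < s := by linarith
  have hp1 : 0 < 1 / p := by positivity
  have hs1 : 0 < 1 / s := by positivity
  by_cases hG : 2⁻¹ * (G₁ + G₂) = 0
  · have h : G₁ = 0 ∧ G₂ = 0 := by simpa using hG
    simp [h.1, h.2, ENNReal.zero_rpow_of_pos (inv_pos.2 hs0)]
  by_cases hF : 2⁻¹ * (F₁ + F₂) = 0
  · have h : F₁ = 0 ∧ F₂ = 0 := by simpa using hF
    simp [h.1, h.2, ENNReal.zero_rpow_of_pos (inv_pos.2 hp0)]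
  by_cases hGt : 2⁻¹ * (G₁ + G₂) = ⊤
  · rw [hGt, ENNReal.top_rpow_of_pos hs1, ENNReal.top_mul (by simp [hF, hp0.le])]
    exact le_top
  by_cases hFt : 2⁻¹ * (F₁ + F₂) = ⊤
  · rw [hFt, ENNReal.top_rpow_of_pos hp1, ENNReal.mul_top (by simp [hG, hs0.le])]
    exact le_top
  have hG' : G₁ ≠ ⊤ ∧ G₂ ≠ ⊤ := by
    constructor <;> rintro rfl <;> simp [ENNReal.mul_top] at hGt
  have hF' : F₁ ≠ ⊤ ∧ F₂ ≠ ⊤ := by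
    constructor <;> rintro rfl <;> simp [ENNReal.mul_top] at hFt
  lift G₁ to NNReal using hG'.1
  lift G₂ to NNReal using hG'.2
  lift F₁ to NNReal using hF'.1
  lift F₂ to NNReal using hF'.2
  have h := two_point_bilinear hpr hs hsr hr hρ hρ0 hρ1 (f₁ := (F₁ : ℝ) ^ (1 / p))
    (f₂ := (F₂ : ℝ) ^ (1 / p)) (g₁ := (G₁ : ℝ) ^ (1 / s)) (g₂ := (G₂ : ℝ) ^ (1 / s))
    (by positivity) (by positivity) (by positivity) (by positivity)
  simp only [← Real.rpow_mul (NNReal.coe_nonneg _), one_div_mul_cancel hp0.ne',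
    one_div_mul_cancel hs0.ne', Real.rpow_one] at h
  have e2 : (2⁻¹ : ℝ≥0∞) = ((2⁻¹ : NNReal) : ℝ≥0∞) := by simp
  rw [e2]
  simp only [ENNReal.ofReal, ← ENNReal.coe_rpow_of_nonneg _ hp1.le,
    ← ENNReal.coe_rpow_of_nonneg _ hs1.le, ← ENNReal.coe_add, ← ENNReal.coe_mul,
    ENNReal.coe_le_coe]
  rw [← NNReal.coe_le_coe]
  push_cast
  rw [Real.coe_toNNReal _ (by linarith), Real.coe_toNNReal _ (by linarith)]
  convert h using 3 <;> ring

/-- The law on `ℂ = ℝ × ℝ` of `δ` times a pair of symmetric signs with correlation `ρ`. -/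
noncomputable def correlatedSigns (ρ δ : ℝ) : Measure ℂ :=
  ENNReal.ofReal ((1 + ρ) / 4) • (Measure.dirac ⟨δ, δ⟩ + Measure.dirac ⟨-δ, -δ⟩) +
    ENNReal.ofReal ((1 - ρ) / 4) • (Measure.dirac ⟨δ, -δ⟩ + Measure.dirac ⟨-δ, δ⟩)

theorem ofReal_add_ofReal_quarter {ρ : ℝ} (hρ0 : 0 ≤ ρ) (hρ1 : ρ ≤ 1) :
    ENNReal.ofReal ((1 + ρ) / 4) + ENNReal.ofReal ((1 - ρ) / 4) = 2⁻¹ := by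
  rw [← ENNReal.ofReal_add (by linarith) (by linarith),
    show (1 + ρ) / 4 + (1 - ρ) / 4 = 2⁻¹ by ring, ENNReal.ofReal_inv_of_pos (by norm_num)]
  simp

theorem lintegral_correlatedSigns (ρ δ : ℝ) (f : ℂ → ℝ≥0∞) :
    ∫⁻ z, f z ∂correlatedSigns ρ δ =
      ENNReal.ofReal ((1 + ρ) / 4) * (f ⟨δ, δ⟩ + f ⟨-δ, -δ⟩) +
        ENNReal.ofReal ((1 - ρ) / 4) * (f ⟨δ, -δ⟩ + f ⟨-δ, δ⟩) := by
  simp [correlatedSigns, lintegral_add_measure, lintegral_smul_measure, mul_add]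

theorem isProbabilityMeasure_correlatedSigns {ρ : ℝ} (hρ0 : 0 ≤ ρ) (hρ1 : ρ ≤ 1) (δ : ℝ) :
    IsProbabilityMeasure (correlatedSigns ρ δ) := by
  constructor
  rw [← lintegral_one, lintegral_correlatedSigns, ← add_mul, ofReal_add_ofReal_quarter hρ0 hρ1,
    one_add_one_eq_two, ENNReal.inv_mul_cancel (by simp) (by simp)]

theorem charFun_correlatedSigns {ρ : ℝ} (hρ0 : 0 ≤ ρ) (hρ1 : ρ ≤ 1) (δ : ℝ) (t : ℂ) :
    charFun (correlatedSigns ρ δ) t =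
      (((1 + ρ) / 2 * Real.cos (δ * (t.re + t.im)) +
        (1 - ρ) / 2 * Real.cos (δ * (t.re - t.im)) : ℝ) : ℂ) := by
  have hi (c : ℝ≥0∞) (hc : c ≠ ⊤) (x y : ℂ) (f : ℂ → ℂ) :
      Integrable f (c • (Measure.dirac x + Measure.dirac y)) :=
    ((integrable_dirac (by simp)).add_measure (integrable_dirac (by simp))).smul_measure hc
  rw [charFun_apply, correlatedSigns,
    integral_add_measure (hi _ (by simp) _ _ _) (hi _ (by simp) _ _ _),
    integral_smul_measure, integral_smul_measure,
    integral_add_measure (integrable_dirac (by simp)) (integrable_dirac (by simp)),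
    integral_add_measure (integrable_dirac (by simp)) (integrable_dirac (by simp))]
  simp only [integral_dirac, Complex.inner]
  rw [ENNReal.toReal_ofReal (by linarith), ENNReal.toReal_ofReal (by linarith)]
  push_cast
  rw [Complex.cos, Complex.cos]
  simp [sub_eq_add_neg]
  ring_nf

/-- A joint law of two real variables `X, Y` for which
`E[G(X)^b F(Y)^a] ≤ E[G(X)]^b E[F(Y)]^a` holds for all non-negative measurable `G, F`. -/
def SatisfiesBilinearBound (b a : ℝ) (m : Measure ℂ) : Prop :=
  ∀ G F : ℝ → ℝ≥0∞, Measurable G → Measurable F →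
    ∫⁻ z, G z.re ^ b * F z.im ^ a ∂m ≤ (∫⁻ z, G z.re ∂m) ^ b * (∫⁻ z, F z.im ∂m) ^ a

theorem satisfiesBilinearBound_correlatedSigns {p r s ρ : ℝ} (hpr : p.HolderConjugate r)
    (hs : 1 < s) (hsr : s ≤ r) (hr : r ≤ 2) (hρ : ρ ^ 2 * (r - 1) = s - 1) (hρ0 : 0 ≤ ρ)
    (hρ1 : ρ ≤ 1) (δ : ℝ) :
    SatisfiesBilinearBound (1 / s) (1 / p) (correlatedSigns ρ δ) := by
  intro G F _ _
  simp only [lintegral_correlatedSigns]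
  rw [add_comm (F (-δ)) (F δ), ← add_mul, ← add_mul, ofReal_add_ofReal_quarter hρ0 hρ1]
  exact two_point_bilinear_ennreal hpr hs hsr hr hρ hρ0 hρ1 _ _ _ _

theorem satisfiesBilinearBound_dirac (b a : ℝ) (z : ℂ) :
    SatisfiesBilinearBound b a (Measure.dirac z) := by
  intro G F _ _
  simp

theorem SatisfiesBilinearBound.conv {b a : ℝ} {m₁ m₂ : Measure ℂ}
    [SFinite m₁] [SFinite m₂]
    (h₁ : SatisfiesBilinearBound b a m₁) (h₂ : SatisfiesBilinearBound b a m₂) :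
    SatisfiesBilinearBound b a (m₁ ∗ m₂) := by
  intro G F hG hF
  have hG' : Measurable fun u : ℝ ↦ ∫⁻ y : ℂ, G (u + y.re) ∂m₂ :=
    Measurable.lintegral_prod_right' (f := fun q : ℝ × ℂ ↦ G (q.1 + q.2.re)) (by fun_prop)
  have hF' : Measurable fun u : ℝ ↦ ∫⁻ y : ℂ, F (u + y.im) ∂m₂ :=
    Measurable.lintegral_prod_right' (f := fun q : ℝ × ℂ ↦ F (q.1 + q.2.im)) (by fun_prop)
  rw [Measure.lintegral_conv (by fun_prop), Measure.lintegral_conv (by fun_prop),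
    Measure.lintegral_conv (by fun_prop)]
  simp only [Complex.add_re, Complex.add_im]
  refine le_trans (lintegral_mono fun x ↦ ?_) (h₁ _ _ hG' hF')
  exact h₂ (fun u ↦ G (x.re + u)) (fun u ↦ F (x.im + u)) (by fun_prop) (by fun_prop)

/-- The `n`-fold convolution power of a measure. -/
noncomputable def convPow (m : Measure ℂ) : ℕ → Measure ℂ
  | 0 => Measure.dirac 0
  | n + 1 => convPow m n ∗ m

instance isProbabilityMeasure_convPow (m : Measure ℂ) [IsProbabilityMeasure m] (n : ℕ) :
    IsProbabilityMeasure (convPow m n) := by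
  induction n with
  | zero => unfold convPow; infer_instance
  | succ n ih => unfold convPow; infer_instance

theorem charFun_convPow (m : Measure ℂ) [IsProbabilityMeasure m] (n : ℕ) (t : ℂ) :
    charFun (convPow m n) t = charFun m t ^ n := by
  induction n with
  | zero => simp [convPow]
  | succ n ih => rw [convPow, charFun_conv, ih, pow_succ]

theorem SatisfiesBilinearBound.convPow {b a : ℝ} {m : Measure ℂ}
    [IsProbabilityMeasure m] (h : SatisfiesBilinearBound b a m) (n : ℕ) :
    SatisfiesBilinearBound b a (convPow m n) := by
  induction n with
  | zero => exact satisfiesBilinearBound_dirac b a 0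
  | succ n ih => exact ih.conv h

theorem tendsto_nat_mul_cos_sub_one (c x : ℝ) :
    Filter.Tendsto (fun n : ℕ ↦ (n : ℝ) * (Real.cos (c / √n * x) - 1)) Filter.atTop
      (nhds (-(c * x) ^ 2 / 2)) := by
  set y := c * x
  have hl : Filter.Tendsto (fun n : ℕ ↦ -y ^ 2 / 2 + y ^ 4 * (5 / 96) * (n : ℝ)⁻¹) Filter.atTop
      (nhds (-y ^ 2 / 2)) := by
    simpa using (tendsto_inv_atTop_nhds_zero_nat (𝕜 := ℝ)).const_mul (y ^ 4 * (5 / 96)) |>.const_add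
      (-y ^ 2 / 2)
  refine tendsto_of_tendsto_of_tendsto_of_le_of_le' tendsto_const_nhds hl ?_ ?_
  · filter_upwards [Filter.eventually_gt_atTop 0] with n hn
    have hn0 : (0 : ℝ) < n := by exact_mod_cast hn
    have h := Real.one_sub_sq_div_two_le_cos (x := c / √n * x)
    have e : (c / √n * x) ^ 2 = y ^ 2 / n := by
      rw [mul_pow, div_pow, Real.sq_sqrt hn0.le]; simp only [y]; ring
    rw [e] at h
    calc -y ^ 2 / 2 = n * (1 - y ^ 2 / n / 2 - 1) := by field_simp; ring
      _ ≤ _ := by gcongr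
  · filter_upwards [Filter.eventually_gt_atTop 0,
      (tendsto_natCast_atTop_atTop (R := ℝ)).eventually_ge_atTop (y ^ 2)] with n hn hy
    have hn0 : (0 : ℝ) < n := by exact_mod_cast hn
    have e : (c / √n * x) ^ 2 = y ^ 2 / n := by
      rw [mul_pow, div_pow, Real.sq_sqrt hn0.le]; simp only [y]; ring
    have h := (abs_le.1 (Real.cos_bound (x := c / √n * x)
      (by rw [← sq_le_one_iff_abs_le_one, e, div_le_one hn0]; exact hy))).2
    have e4 : |c / √n * x| ^ 4 = y ^ 4 / n ^ 2 := by
      rw [show 4 = 2 * 2 by rfl, pow_mul, sq_abs, e]; ring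
    rw [e, e4] at h
    calc _ ≤ n * (y ^ 4 / n ^ 2 * (5 / 96) + (1 - y ^ 2 / n / 2) - 1) := by gcongr; linarith
      _ = _ := by field_simp; ring

theorem tendsto_charFun_convPow_correlatedSigns {ρ : ℝ} (hρ0 : 0 ≤ ρ) (hρ1 : ρ ≤ 1) (σ : ℝ)
    (t : ℂ) :
    Filter.Tendsto (fun n : ℕ ↦ charFun (convPow (correlatedSigns ρ (σ / √n)) n) t) Filter.atTop
      (nhds (Real.exp (-(σ ^ 2 * (t.re ^ 2 + t.im ^ 2 + 2 * ρ * t.re * t.im)) / 2) : ℝ)) := by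
  have := isProbabilityMeasure_correlatedSigns hρ0 hρ1
  simp_rw [charFun_convPow, charFun_correlatedSigns hρ0 hρ1, ← Complex.ofReal_pow]
  refine (Complex.continuous_ofReal.tendsto _).comp ?_
  have h := ((tendsto_nat_mul_cos_sub_one σ (t.re + t.im)).const_mul ((1 + ρ) / 2)).add
    ((tendsto_nat_mul_cos_sub_one σ (t.re - t.im)).const_mul ((1 - ρ) / 2))
  have h' := Real.tendsto_one_add_pow_exp_of_tendsto (h.congr (f₂ := fun n : ℕ ↦ n *
    ((1 + ρ) / 2 * (Real.cos (σ / √n * (t.re + t.im)) - 1) +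
      (1 - ρ) / 2 * (Real.cos (σ / √n * (t.re - t.im)) - 1))) (fun n ↦ by ring))
  convert h' using 2
  · ring
  · ring_nf

theorem map_prod_gaussianReal_add {ρ c : ℝ} (hρc : ρ ^ 2 + c ^ 2 = 1) (v : NNReal) :
    ((gaussianReal 0 v).prod (gaussianReal 0 v)).map (fun x ↦ ρ * x.1 + c * x.2) =
      gaussianReal 0 v := by
  have h : (gaussianReal 0 v).map (ρ * ·) ∗ (gaussianReal 0 v).map (c * ·) = gaussianReal 0 v := by
    rw [gaussianReal_map_const_mul, gaussianReal_map_const_mul, gaussianReal_conv_gaussianReal]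
    congr 1
    · simp
    · rw [← add_mul]
      convert one_mul v
      ext
      simpa using hρc
  conv_rhs => rw [← h]
  rw [Measure.conv, Measure.map_prod_map _ _ (by fun_prop) (by fun_prop),
    Measure.map_map (by fun_prop) (by fun_prop)]
  rfl

/-- The law on `ℂ = ℝ × ℝ` of `(X, ρ X + c Y)`, where `X, Y` are independent centered Gaussians. -/
noncomputable def correlatedGaussians (v : NNReal) (ρ c : ℝ) : Measure ℂ :=
  ((gaussianReal 0 v).prod (gaussianReal 0 v)).map (fun x ↦ (⟨x.1, ρ * x.1 + c * x.2⟩ : ℂ))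

theorem measurable_complex_mk_affine (ρ c : ℝ) :
    Measurable fun x : ℝ × ℝ ↦ (⟨x.1, ρ * x.1 + c * x.2⟩ : ℂ) :=
  Complex.measurableEquivRealProd.symm.measurable.comp
    (f := fun x : ℝ × ℝ ↦ (x.1, ρ * x.1 + c * x.2)) (by fun_prop)

instance isProbabilityMeasure_correlatedGaussians (v : NNReal) (ρ c : ℝ) :
    IsProbabilityMeasure (correlatedGaussians v ρ c) :=
  Measure.isProbabilityMeasure_map (measurable_complex_mk_affine ρ c).aemeasurable

theorem lintegral_correlatedGaussians (v : NNReal) (ρ c : ℝ) {f : ℂ → ℝ≥0∞} (hf : Measurable f) :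
    ∫⁻ z, f z ∂correlatedGaussians v ρ c =
      ∫⁻ x, ∫⁻ y, f ⟨x, ρ * x + c * y⟩ ∂gaussianReal 0 v ∂gaussianReal 0 v := by
  have h : Measurable fun x : ℝ × ℝ ↦ f ⟨x.1, ρ * x.1 + c * x.2⟩ :=
    hf.comp (measurable_complex_mk_affine ρ c)
  rw [correlatedGaussians, lintegral_map hf (measurable_complex_mk_affine ρ c),
    lintegral_prod _ h.aemeasurable]

theorem lintegral_correlatedGaussians_re (v : NNReal) (ρ c : ℝ) {f : ℝ → ℝ≥0∞}
    (hf : Measurable f) :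
    ∫⁻ z, f z.re ∂correlatedGaussians v ρ c = ∫⁻ x, f x ∂gaussianReal 0 v := by
  rw [lintegral_correlatedGaussians _ _ _ (by fun_prop)]
  simp

theorem lintegral_correlatedGaussians_im (v : NNReal) {ρ c : ℝ} (hρc : ρ ^ 2 + c ^ 2 = 1)
    {f : ℝ → ℝ≥0∞} (hf : Measurable f) :
    ∫⁻ z, f z.im ∂correlatedGaussians v ρ c = ∫⁻ x, f x ∂gaussianReal 0 v := by
  rw [correlatedGaussians, lintegral_map (by fun_prop) (measurable_complex_mk_affine ρ c)]
  conv_rhs => rw [← map_prod_gaussianReal_add hρc v, lintegral_map hf (by fun_prop)]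

theorem charFun_correlatedGaussians (v : NNReal) {ρ c : ℝ} (hρc : ρ ^ 2 + c ^ 2 = 1) (t : ℂ) :
    charFun (correlatedGaussians v ρ c) t =
      (Real.exp (-(v * (t.re ^ 2 + t.im ^ 2 + 2 * ρ * t.re * t.im)) / 2) : ℝ) := by
  have h : charFun (correlatedGaussians v ρ c) t =
      charFun (gaussianReal 0 v) (t.re + ρ * t.im) * charFun (gaussianReal 0 v) (c * t.im) := by
    rw [charFun_apply, correlatedGaussians,
      integral_map (measurable_complex_mk_affine ρ c).aemeasurable (by fun_prop),
      charFun_apply_real, charFun_apply_real, ← integral_prod_mul]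
    congr 1 with x
    rw [← Complex.exp_add]
    congr 1
    simp [Complex.inner]
    ring
  rw [h, charFun_gaussianReal, charFun_gaussianReal, ← Complex.exp_add, Complex.ofReal_exp]
  congr 1
  have hρc' : (ρ : ℂ) ^ 2 + (c : ℂ) ^ 2 = 1 := by exact_mod_cast hρc
  push_cast
  linear_combination (-(v : ℂ) * (t.im : ℂ) ^ 2 / 2) * hρc'

theorem tendsto_lintegral_convPow_correlatedSigns {ρ c : ℝ} (hρ0 : 0 ≤ ρ) (hρ1 : ρ ≤ 1)
    (hρc : ρ ^ 2 + c ^ 2 = 1) (v : NNReal) {f : ℂ → ℝ} (hf : Continuous f) (hf0 : ∀ z, 0 ≤ f z)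
    {C : ℝ} (hfC : ∀ z, f z ≤ C) :
    Filter.Tendsto
      (fun n : ℕ ↦ ∫⁻ z, ENNReal.ofReal (f z) ∂convPow (correlatedSigns ρ (√v / √n)) n)
      Filter.atTop (nhds (∫⁻ z, ENNReal.ofReal (f z) ∂correlatedGaussians v ρ c)) := by
  have := isProbabilityMeasure_correlatedSigns hρ0 hρ1
  let μ : ℕ → ProbabilityMeasure ℂ := fun n ↦
    ⟨convPow (correlatedSigns ρ (√v / √n)) n, inferInstance⟩
  let μ₀ : ProbabilityMeasure ℂ := ⟨correlatedGaussians v ρ c, inferInstance⟩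
  have h : Filter.Tendsto μ Filter.atTop (nhds μ₀) := by
    refine ProbabilityMeasure.tendsto_of_tendsto_charFun fun t ↦ ?_
    have := tendsto_charFun_convPow_correlatedSigns hρ0 hρ1 √v t
    rw [Real.sq_sqrt v.coe_nonneg] at this
    simpa only [μ, μ₀, ProbabilityMeasure.coe_mk, charFun_correlatedGaussians v hρc t] using this
  refine ProbabilityMeasure.tendsto_iff_forall_lintegral_tendsto.1 h
    (BoundedContinuousFunction.mkOfBound ⟨fun z ↦ (f z).toNNReal, by fun_prop⟩ C fun x y ↦ ?_)
  simp only [ContinuousMap.coe_mk, NNReal.dist_eq, Real.coe_toNNReal _ (hf0 _)]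
  rw [abs_le]
  constructor <;> linarith [hf0 x, hf0 y, hfC x, hfC y]

theorem lintegral_correlatedGaussians_mul_le {p r s ρ c : ℝ} (hpr : p.HolderConjugate r)
    (hs : 1 < s) (hsr : s ≤ r) (hr : r ≤ 2) (hρ : ρ ^ 2 * (r - 1) = s - 1) (hρ0 : 0 ≤ ρ)
    (hρ1 : ρ ≤ 1) (hρc : ρ ^ 2 + c ^ 2 = 1) (v : NNReal) {f g : ℝ → ℝ} (hf : Continuous f)
    (hg : Continuous g) (hf0 : ∀ x, 0 ≤ f x) (hg0 : ∀ x, 0 ≤ g x) {C D : ℝ} (hfC : ∀ x, f x ≤ C)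
    (hgD : ∀ x, g x ≤ D) :
    ∫⁻ z, ENNReal.ofReal (g z.re * f z.im) ∂correlatedGaussians v ρ c ≤
      (∫⁻ x, ENNReal.ofReal (g x ^ s) ∂gaussianReal 0 v) ^ (1 / s) *
        (∫⁻ x, ENNReal.ofReal (f x ^ p) ∂gaussianReal 0 v) ^ (1 / p) := by
  have hp0 : 0 < p := hpr.pos
  have hs0 : 0 < s := by linarith
  have cg : Continuous fun x ↦ g x ^ s := hg.rpow_const fun _ ↦ Or.inr hs0.le
  have cf : Continuous fun x ↦ f x ^ p := hf.rpow_const fun _ ↦ Or.inr hp0.le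
  have bg (x) : g x ^ s ≤ D ^ s := Real.rpow_le_rpow (hg0 x) (hgD x) hs0.le
  have bf (x) : f x ^ p ≤ C ^ p := Real.rpow_le_rpow (hf0 x) (hfC x) hp0.le
  have fin {u : ℝ → ℝ} {B : ℝ} (hu : ∀ x, u x ≤ B) :
      ∫⁻ x, ENNReal.ofReal (u x) ∂gaussianReal 0 v ≠ ⊤ := by
    refine ne_top_of_le_ne_top (b := ENNReal.ofReal B) (by simp) ?_
    refine (lintegral_mono fun x ↦ ENNReal.ofReal_le_ofReal (hu x)).trans ?_
    simp
  have := isProbabilityMeasure_correlatedSigns hρ0 hρ1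
  have lim := @tendsto_lintegral_convPow_correlatedSigns ρ c hρ0 hρ1 hρc v
  have l1 := lim (f := fun z ↦ g z.re * f z.im) (by fun_prop)
    (fun z ↦ mul_nonneg (hg0 _) (hf0 _)) (C := D * C)
    (fun z ↦ mul_le_mul (hgD _) (hfC _) (hf0 _) ((hg0 0).trans (hgD 0)))
  have l2 := lim (f := fun z ↦ g z.re ^ s) (cg.comp Complex.continuous_re)
    (fun z ↦ Real.rpow_nonneg (hg0 _) _) (fun z ↦ bg _)
  have l3 := lim (f := fun z ↦ f z.im ^ p) (cf.comp Complex.continuous_im)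
    (fun z ↦ Real.rpow_nonneg (hf0 _) _) (fun z ↦ bf _)
  rw [lintegral_correlatedGaussians_re v ρ c (f := fun x ↦ ENNReal.ofReal (g x ^ s))
    (cg.measurable.ennreal_ofReal)] at l2
  rw [lintegral_correlatedGaussians_im v hρc (f := fun x ↦ ENNReal.ofReal (f x ^ p))
    (cf.measurable.ennreal_ofReal)] at l3
  refine le_of_tendsto_of_tendsto' l1 (ENNReal.Tendsto.mul (l2.ennrpow_const (1 / s)) (Or.inr ?_)
    (l3.ennrpow_const (1 / p)) (Or.inr ?_)) fun n ↦ ?_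
  · exact ENNReal.rpow_ne_top_of_nonneg (by positivity) (fin bf)
  · exact ENNReal.rpow_ne_top_of_nonneg (by positivity) (fin bg)
  · have hb := (satisfiesBilinearBound_correlatedSigns hpr hs hsr hr hρ hρ0 hρ1
      (√v / √n)).convPow n (fun x ↦ ENNReal.ofReal (g x ^ s)) (fun x ↦ ENNReal.ofReal (f x ^ p))
      cg.measurable.ennreal_ofReal cf.measurable.ennreal_ofReal
    refine le_trans (le_of_eq ?_) hb
    congr 1 with z
    rw [ENNReal.ofReal_rpow_of_nonneg (Real.rpow_nonneg (hg0 _) _) (by positivity),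
      ENNReal.ofReal_rpow_of_nonneg (Real.rpow_nonneg (hf0 _) _) (by positivity),
      ← Real.rpow_mul (hg0 _), ← Real.rpow_mul (hf0 _), mul_one_div_cancel hs0.ne',
      mul_one_div_cancel hp0.ne', Real.rpow_one, Real.rpow_one, ENNReal.ofReal_mul (hg0 _)]

theorem hypercontractive_of_bounded_continuous {p q ρ c : ℝ} (hp : 2 ≤ p) (hpq : p ≤ q)
    (hρ : ρ ^ 2 * (q - 1) = p - 1) (hρ0 : 0 ≤ ρ) (hρc : ρ ^ 2 + c ^ 2 = 1) (v : NNReal)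
    {f : ℝ → ℝ} (hf : Continuous f) (hf0 : ∀ x, 0 ≤ f x) {C : ℝ} (hfC : ∀ x, f x ≤ C) :
    eLpNorm (fun x ↦ ∫ y, f (ρ * x + c * y) ∂gaussianReal 0 v) (ENNReal.ofReal q)
      (gaussianReal 0 v) ≤ eLpNorm f (ENNReal.ofReal p) (gaussianReal 0 v) := by
  have hp0 : 0 < p := by linarith
  have hq0 : 0 < q := by linarith
  have hρ1 : ρ ≤ 1 := by nlinarith
  have hp1 : p - 1 ≠ 0 := by linarith
  have hq1 : q - 1 ≠ 0 := by linarith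
  set K : ℝ → ℝ := fun x ↦ ∫ y, f (ρ * x + c * y) ∂gaussianReal 0 v with hK
  have hK0 (x) : 0 ≤ K x := integral_nonneg fun y ↦ hf0 _
  have hint (x) : Integrable (fun y ↦ f (ρ * x + c * y)) (gaussianReal 0 v) :=
    Integrable.of_bound (by fun_prop) C
      (Filter.Eventually.of_forall fun y ↦ by simpa [abs_of_nonneg (hf0 _)] using hfC _)
  have hKC (x) : K x ≤ C := by
    refine (integral_mono (hint x) (integrable_const C) fun y ↦ hfC _).trans ?_
    simp
  have hKc : Continuous K := by
    refine continuous_of_dominated (bound := fun _ ↦ C) (fun x ↦ by fun_prop)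
      (fun x ↦ Filter.Eventually.of_forall fun y ↦ ?_) (integrable_const C)
      (Filter.Eventually.of_forall fun y ↦ by fun_prop)
    simpa [abs_of_nonneg (hf0 _)] using hfC _
  have hb := lintegral_correlatedGaussians_mul_le (p := p) (r := p / (p - 1)) (s := q / (q - 1))
    (ρ := ρ) (c := c) (Real.HolderConjugate.conjExponent (by linarith))
    (by rw [lt_div_iff₀ (by linarith)]; linarith)
    (by rw [div_le_div_iff₀ (by linarith) (by linarith)]; linarith)
    (by rw [div_le_iff₀ (by linarith)]; linarith)
    (by field_simp; linear_combination hρ)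
    hρ0 hρ1 hρc v hf (g := fun x ↦ K x ^ (q - 1))
    (hKc.rpow_const fun _ ↦ Or.inr (by linarith)) hf0 (fun x ↦ Real.rpow_nonneg (hK0 x) _)
    hfC (D := C ^ (q - 1)) (fun x ↦ Real.rpow_le_rpow (hK0 x) (hKC x) (by linarith))
  have hcg : Continuous fun x ↦ K x ^ (q - 1) := hKc.rpow_const fun _ ↦ Or.inr (by linarith)
  rw [lintegral_correlatedGaussians _ _ _ (by fun_prop)] at hb
  have hL (x) : ∫⁻ y, ENNReal.ofReal (K x ^ (q - 1) * f (ρ * x + c * y)) ∂gaussianReal 0 v =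
      ENNReal.ofReal (K x ^ q) := by
    simp_rw [ENNReal.ofReal_mul (Real.rpow_nonneg (hK0 x) _)]
    rw [lintegral_const_mul _ (by fun_prop), ← ofReal_integral_eq_lintegral_ofReal (hint x)
      (Filter.Eventually.of_forall fun y ↦ hf0 _), ← ENNReal.ofReal_mul
      (Real.rpow_nonneg (hK0 x) _), ← Real.rpow_add_one' (hK0 x) (by linarith), sub_add_cancel]
  have hR (x) : (K x ^ (q - 1)) ^ (q / (q - 1)) = K x ^ q := by
    rw [← Real.rpow_mul (hK0 x), mul_div_cancel₀ _ hq1]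
  simp only [hL, hR] at hb
  have hN {u : ℝ → ℝ} (hu : ∀ x, 0 ≤ u x) {e : ℝ} (he : 0 < e) :
      eLpNorm u (ENNReal.ofReal e) (gaussianReal 0 v) =
        (∫⁻ x, ENNReal.ofReal (u x ^ e) ∂gaussianReal 0 v) ^ (1 / e) := by
    rw [eLpNorm_eq_lintegral_rpow_enorm_toReal (by simpa using he) (by simp),
      ENNReal.toReal_ofReal he.le]
    congr 2 with x
    rw [Real.enorm_of_nonneg (hu x), ENNReal.ofReal_rpow_of_nonneg (hu x) he.le]
  rw [hN hK0 hq0, hN hf0 hp0]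
  set A := ∫⁻ x, ENNReal.ofReal (K x ^ q) ∂gaussianReal 0 v with hA
  have hAt : A ≠ ⊤ := by
    refine ne_top_of_le_ne_top (b := ENNReal.ofReal (C ^ q)) (by simp) ?_
    refine (lintegral_mono fun x ↦ ENNReal.ofReal_le_ofReal
      (Real.rpow_le_rpow (hK0 x) (hKC x) hq0.le)).trans ?_
    simp
  by_cases hA0 : A = 0
  · rw [hA0, ENNReal.zero_rpow_of_pos (by positivity)]
    exact zero_le
  have hsplit : A = A ^ (1 / (q / (q - 1))) * A ^ (1 / q) := by
    rw [← ENNReal.rpow_add _ _ hA0 hAt]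
    conv_lhs => rw [← ENNReal.rpow_one A]
    congr 1
    field_simp
    ring
  nth_rewrite 1 [hsplit] at hb
  refine (ENNReal.mul_le_mul_iff_right ?_ ?_).1 hb
  · simp [ENNReal.rpow_eq_zero_iff, hA0, hAt]
  · simp [ENNReal.rpow_eq_top_iff, hA0, hAt]

theorem ae_ae_comp_affine_eq {ρ c : ℝ} (hρc : ρ ^ 2 + c ^ 2 = 1) {v : NNReal} {ν : Measure ℝ}
    (hν : ν = gaussianReal 0 v) {f g : ℝ → ℝ}
    (hfg : f =ᵐ[ν] g) :
    ∀ᵐ x ∂ν, ∀ᵐ y ∂ν, f (ρ * x + c * y) = g (ρ * x + c * y) := by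
  subst hν
  rw [← map_prod_gaussianReal_add hρc v] at hfg
  exact Measure.ae_ae_of_ae_prod (ae_of_ae_map (by fun_prop) hfg)

theorem eLpNorm_le_of_memLp {p q ρ c : ℝ} (hp : 2 ≤ p) (hpq : p ≤ q)
    (hρ : ρ ^ 2 * (q - 1) = p - 1) (hρ0 : 0 ≤ ρ) (hρc : ρ ^ 2 + c ^ 2 = 1) {v : NNReal}
    {ν : Measure ℝ} (hν : ν = gaussianReal 0 v) (Q : Lp ℝ 2 (ν) →L[ℝ] Lp ℝ 2 (ν))
    (hQ : ∀ f : Lp ℝ 2 (ν), (Q f : ℝ → ℝ) =ᵐ[ν]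
      fun x ↦ ∫ y, (f : ℝ → ℝ) (ρ * x + c * y) ∂ν)
    (f : Lp ℝ 2 (ν)) (hf : MemLp f (ENNReal.ofReal p) (ν)) :
    eLpNorm (Q f) (ENNReal.ofReal q) (ν) ≤
      eLpNorm f (ENNReal.ofReal p) (ν) := by
  have : IsProbabilityMeasure ν := hν ▸ inferInstance
  have hp2 : 2 ≤ ENNReal.ofReal p := by
    rw [← ENNReal.ofReal_ofNat]
    exact ENNReal.ofReal_le_ofReal hp
  have hp1 : 1 ≤ ENNReal.ofReal p := le_trans (by norm_num) hp2
  have happ (n : ℕ) := hf.exists_boundedContinuous_eLpNorm_sub_le (by simp)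
    (ε := (n : ℝ≥0∞)⁻¹) (by simp)
  choose g hg hgm using happ
  have hgm2 (n) : MemLp (g n) 2 ν := (hgm n).mono_exponent hp2
  have hlim : Filter.Tendsto (fun n ↦ (hgm2 n).toLp (g n)) Filter.atTop (nhds f) := by
    rw [Lp.tendsto_Lp_iff_tendsto_eLpNorm' ]
    refine tendsto_of_tendsto_of_tendsto_of_le_of_le tendsto_const_nhds
      ENNReal.tendsto_inv_nat_nhds_zero (fun n ↦ zero_le) fun n ↦ ?_
    rw [eLpNorm_sub_comm]
    calc _ = eLpNorm ((f : ℝ → ℝ) - (g n : ℝ → ℝ)) 2 ν :=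
          eLpNorm_congr_ae ((ae_eq_refl _).sub (hgm2 n).coeFn_toLp)
      _ ≤ eLpNorm ((f : ℝ → ℝ) - (g n : ℝ → ℝ)) (ENNReal.ofReal p) ν :=
          eLpNorm_le_eLpNorm_of_exponent_le hp2 (hf.1.sub (hgm n).1)
      _ ≤ _ := hg n
  have hbound (n) : eLpNorm (Q ((hgm2 n).toLp (g n))) (ENNReal.ofReal q) ν ≤
      eLpNorm f (ENNReal.ofReal p) ν + (n : ℝ≥0∞)⁻¹ := by
    calc _ ≤ eLpNorm (fun x ↦ ∫ y, ‖g n (ρ * x + c * y)‖ ∂ν) (ENNReal.ofReal q) ν := by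
          refine eLpNorm_mono_ae ?_
          filter_upwards [hQ ((hgm2 n).toLp (g n)),
            ae_ae_comp_affine_eq hρc hν (hgm2 n).coeFn_toLp] with x hx hx'
          rw [hx, integral_congr_ae hx']
          exact (norm_integral_le_integral_norm _).trans (le_abs_self _)
      _ ≤ eLpNorm (fun x ↦ ‖g n x‖) (ENNReal.ofReal p) ν :=
          hν ▸ hypercontractive_of_bounded_continuous hp hpq hρ hρ0 hρc v (f := fun x ↦ ‖g n x‖)
            (by fun_prop) (fun x ↦ norm_nonneg _) (fun x ↦ (g n).norm_coe_le_norm x)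
      _ = eLpNorm ((f : ℝ → ℝ) - ((f : ℝ → ℝ) - (g n : ℝ → ℝ))) (ENNReal.ofReal p) ν := by
          rw [eLpNorm_norm, sub_sub_cancel]
      _ ≤ _ := (eLpNorm_sub_le hf.1 (hf.1.sub (hgm n).1) hp1).trans (by gcongr; exact hg n)
  obtain ⟨φ, hφ, hae⟩ := (tendstoInMeasure_of_tendsto_Lp
    ((Q.continuous.tendsto f).comp hlim)).exists_seq_tendsto_ae
  refine (Lp.eLpNorm_lim_le_liminf_eLpNorm (fun n ↦ Lp.aestronglyMeasurable _) _ hae).trans ?_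
  have ht : Filter.Tendsto (fun n ↦ eLpNorm f (ENNReal.ofReal p) ν + ((φ n : ℕ) : ℝ≥0∞)⁻¹)
      Filter.atTop (nhds (eLpNorm f (ENNReal.ofReal p) ν)) := by
    simpa using (ENNReal.tendsto_inv_nat_nhds_zero.comp hφ.tendsto_atTop).const_add
      (eLpNorm f (ENNReal.ofReal p) ν)
  exact (Filter.liminf_le_liminf (Filter.Eventually.of_forall fun n ↦ hbound (φ n))).trans
    ht.liminf_eq.le

/-- The top normalized non-negative eigenfunction χ_h of
L_h = π_h(dQ_{log d})π_h with eigenvalue λ_h = ‖L_h‖ > 0 satisfies the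
hypercontractive bounds ‖χ_h‖_{L^{q_k}(ν)} ≤ (d/λ_h)^k, where q_k = 1 + d^{2k}. -/
theorem stmt_8 (d : ℕ) (hd : 2 ≤ d)
    (ν : Measure ℝ) (hν : ν = gaussianReal 0 (Real.toNNReal ((d : ℝ) / ((d : ℝ) ^ 2 - 1))))
    (Q : Lp ℝ 2 ν →L[ℝ] Lp ℝ 2 ν)
    (hQ : ∀ f : Lp ℝ 2 ν, (Q f : ℝ → ℝ) =ᵐ[ν]
      fun a => ∫ y, (f : ℝ → ℝ) (a / d + Real.sqrt (1 - 1 / (d : ℝ) ^ 2) * y) ∂ν)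
    (h : ℝ) (Ph : Lp ℝ 2 ν →L[ℝ] Lp ℝ 2 ν)
    (hPh : ∀ f : Lp ℝ 2 ν, (Ph f : ℝ → ℝ) =ᵐ[ν]
      fun a => if h ≤ a then (f : ℝ → ℝ) a else 0)
    (Lh : Lp ℝ 2 ν →L[ℝ] Lp ℝ 2 ν) (hLh : Lh = Ph ∘L ((d : ℝ) • Q) ∘L Ph)
    (hpos : 0 < ‖Lh‖)
    (χ : Lp ℝ 2 ν) (hχnn : ∀ᵐ a ∂ν, 0 ≤ (χ : ℝ → ℝ) a) (hχnorm : ‖χ‖ = 1)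
    (hχeig : Lh χ = ‖Lh‖ • χ) :
    ∀ k : ℕ, eLpNorm (χ : ℝ → ℝ) (1 + (d : ℝ≥0∞) ^ (2 * k)) ν ≤
      ENNReal.ofReal (((d : ℝ) / ‖Lh‖) ^ k) := by
  have hd' : (2 : ℝ) ≤ d := by exact_mod_cast hd
  have hd0 : (0 : ℝ) < d := by linarith
  have hexp (k : ℕ) : 1 + (d : ℝ≥0∞) ^ (2 * k) = ENNReal.ofReal (1 + (d : ℝ) ^ (2 * k)) := by
    rw [ENNReal.ofReal_add (by norm_num) (by positivity), ENNReal.ofReal_pow hd0.le]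
    simp
  have hP (f : Lp ℝ 2 ν) (q : ℝ≥0∞) : eLpNorm (Ph f) q ν ≤ eLpNorm f q ν := by
    refine eLpNorm_mono_ae ?_
    filter_upwards [hPh f] with a ha
    rw [ha]
    split_ifs <;> simp
  have heig : χ = ((d : ℝ) / ‖Lh‖) • Ph (Q (Ph χ)) := by
    have h1 : (d : ℝ) • Ph (Q (Ph χ)) = ‖Lh‖ • χ := by
      rw [← hχeig]
      conv_rhs => rw [hLh]
      simp
    rw [div_eq_inv_mul, mul_smul, h1, smul_smul, inv_mul_cancel₀ hpos.ne', one_smul]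
  have hQ' (f : Lp ℝ 2 ν) : (Q f : ℝ → ℝ) =ᵐ[ν]
      fun x ↦ ∫ y, (f : ℝ → ℝ) (1 / (d : ℝ) * x + √(1 - 1 / (d : ℝ) ^ 2) * y) ∂ν := by
    filter_upwards [hQ f] with x hx
    rw [hx, one_div_mul_eq_div]
  have hd1 : 1 / (d : ℝ) ^ 2 ≤ 1 := by
    rw [div_le_one (by positivity)]
    nlinarith
  have hρc : (1 / (d : ℝ)) ^ 2 + √(1 - 1 / (d : ℝ) ^ 2) ^ 2 = 1 := by
    rw [Real.sq_sqrt (by linarith), one_div_pow]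
    ring
  intro k
  induction k with
  | zero =>
    rw [Lp.norm_def, ENNReal.toReal_eq_one_iff] at hχnorm
    rw [mul_zero, pow_zero, pow_zero, one_add_one_eq_two, hχnorm, ENNReal.ofReal_one]
  | succ k ih =>
    have hk : 1 ≤ (d : ℝ) ^ (2 * k) := one_le_pow₀ (by linarith)
    have hmem : MemLp (Ph χ) (ENNReal.ofReal (1 + (d : ℝ) ^ (2 * k))) ν := by
      rw [← hexp]
      exact ⟨Lp.aestronglyMeasurable _, ((hP χ _).trans ih).trans_lt ENNReal.ofReal_lt_top⟩
    have hhyp := eLpNorm_le_of_memLp (p := 1 + (d : ℝ) ^ (2 * k))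
      (q := 1 + (d : ℝ) ^ (2 * (k + 1))) (by linarith)
      (by gcongr; linarith; omega)
      (by simp only [add_sub_cancel_left]; field_simp; ring) (by positivity) hρc hν Q hQ' (Ph χ)
      hmem
    rw [← hexp, ← hexp] at hhyp
    calc _ = eLpNorm (((d : ℝ) / ‖Lh‖) • (Ph (Q (Ph χ)) : ℝ → ℝ)) _ ν := by
          conv_lhs => rw [heig]
          exact eLpNorm_congr_ae (Lp.coeFn_smul _ _)
      _ = ENNReal.ofReal ((d : ℝ) / ‖Lh‖) * eLpNorm (Ph (Q (Ph χ))) _ ν := by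
          rw [eLpNorm_const_smul, Real.enorm_of_nonneg (by positivity)]
      _ ≤ ENNReal.ofReal ((d : ℝ) / ‖Lh‖) * ENNReal.ofReal (((d : ℝ) / ‖Lh‖) ^ k) := by
          gcongr
          exact (hP _ _).trans (hhyp.trans ((hP _ _).trans ih))
      _ = _ := by rw [← ENNReal.ofReal_mul (by positivity), pow_succ']
end

section
/- The function h ↦ λ_h = ‖π_h (dQ_{log d}) π_h‖_{L²(ν)→L²(ν)} is strictly decreasing on ℝ. -/
open MeasureTheory ProbabilityTheory

section PositiveKernel

variable {α : Type*} [MeasurableSpace α] {μ : Measure α}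

lemma norm_sq_eq_integral_sq_of_Lp (f : Lp ℝ 2 μ) : ‖f‖ ^ 2 = ∫ a, f a ^ 2 ∂μ := by
  rw [← real_inner_self_eq_norm_sq, L2.inner_def]
  refine integral_congr_ae (Filter.Eventually.of_forall fun a => ?_)
  simp [pow_two]

lemma MeasureTheory.MemLp.integrable_mul_Lp_two {g : α → ℝ} (hg : MemLp g 2 μ) (f : Lp ℝ 2 μ) :
    Integrable (fun a => g a * f a) μ :=
  hg.integrable_mul (Lp.memLp f)

lemma integral_mul_le_eLpNorm_mul_norm {g : α → ℝ} (hg : MemLp g 2 μ) (f : Lp ℝ 2 μ) :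
    ∫ a, g a * f a ∂μ ≤ (eLpNorm g 2 μ).toReal * ‖f‖ := by
  have h : ∫ a, g a * f a ∂μ = inner ℝ (hg.toLp g) f := by
    rw [L2.inner_def]
    refine integral_congr_ae ?_
    filter_upwards [hg.coeFn_toLp] with a ha
    simp [ha, mul_comm]
  rw [h, ← Lp.norm_toLp g hg]
  exact real_inner_le_norm _ _

lemma norm_sq_add_mul_measureReal_le [IsFiniteMeasure μ] {u v : Lp ℝ 2 μ} {s : Set α}
    (hs : MeasurableSet s) {δ : ℝ}
    (h : ∀ᵐ a ∂μ, u a ^ 2 + s.indicator (fun _ => δ) a ≤ v a ^ 2) :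
    ‖u‖ ^ 2 + δ * μ.real s ≤ ‖v‖ ^ 2 := by
  have hu : Integrable (fun a => u a ^ 2) μ := (Lp.memLp u).integrable_sq
  have hi : Integrable (s.indicator fun _ => δ) μ := (integrable_const δ).indicator hs
  rw [norm_sq_eq_integral_sq_of_Lp, norm_sq_eq_integral_sq_of_Lp]
  calc _ = ∫ a, (u a ^ 2 + s.indicator (fun _ => δ) a) ∂μ := by
        rw [integral_add hu hi, integral_indicator_const _ hs, smul_eq_mul, mul_comm]
    _ ≤ _ := integral_mono_ae (hu.add hi) (Lp.memLp v).integrable_sq h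

/-- Truncations to the half-lines `[h, ∞)` of an integral operator with positive kernel, dominated
by a rank-one kernel, have strictly decreasing operator norms. -/
theorem strictAnti_norm_truncation {ν : Measure ℝ} [IsProbabilityMeasure ν] [ν.IsOpenPosMeasure]
    {K : ℝ → ℝ → ℝ} {w : ℝ → ℝ} {C : ℝ} (hKm : ∀ a, Measurable (K a)) (hK0 : ∀ a y, 0 < K a y)
    (hC : 0 ≤ C) (hKw : ∀ a y, K a y ≤ C * (w a * w y)) (hw0 : ∀ y, 0 ≤ w y)
    (hwm : Measurable w) (hw : MemLp w 2 ν)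
    (hlow : ∀ b c M : ℝ, ∃ k > 0, ∀ a ∈ Set.Ioo b c, ∀ y, w y < M → k ≤ K a y)
    {Q : Lp ℝ 2 ν →L[ℝ] Lp ℝ 2 ν} (hQ : ∀ f : Lp ℝ 2 ν, Q f =ᵐ[ν] fun a => ∫ y, K a y * f y ∂ν)
    {P : ℝ → (Lp ℝ 2 ν →L[ℝ] Lp ℝ 2 ν)}
    (hP : ∀ (h : ℝ) (f : Lp ℝ 2 ν), P h f =ᵐ[ν] fun a => if h ≤ a then f a else 0) :
    StrictAnti fun h : ℝ => ‖P h ∘L Q ∘L P h‖ := by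
  intro b h hbh
  change ‖P h ∘L Q ∘L P h‖ < ‖P b ∘L Q ∘L P b‖
  have hKL : ∀ a, MemLp (K a) 2 ν := fun a =>
    (hw.const_mul (C * w a)).mono' (hKm a).aestronglyMeasurable
      (Filter.Eventually.of_forall fun y => by
        rw [Real.norm_eq_abs, abs_of_pos (hK0 a y)]
        exact (hKw a y).trans_eq (by ring))
  have hKf : ∀ a (f : Lp ℝ 2 ν), Integrable (fun y => K a y * f y) ν :=
    fun a f => (hKL a).integrable_mul_Lp_two f
  have hPle : ∀ f : Lp ℝ 2 ν, ‖P h f‖ ≤ ‖f‖ := fun f => by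
    refine Lp.norm_le_norm_of_ae_le ?_
    filter_upwards [hP h f] with a ha
    rw [ha]
    split_ifs <;> simp
  have hT : ∀ f : Lp ℝ 2 ν, (P h ∘L Q ∘L P h) f =ᵐ[ν]
      fun a => if h ≤ a then ∫ y, K a y * P h f y ∂ν else 0 := fun f => by
    filter_upwards [hP h (Q (P h f)), hQ (P h f)] with a h1 h2
    simp only [ContinuousLinearMap.comp_apply]
    rw [h1, h2]
  set T := P h ∘L Q ∘L P h with hTdef
  set T' := P b ∘L Q ∘L P b with hTdef'
  have hTpos : 0 < ‖T‖ := by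
    rw [norm_pos_iff]
    intro h0
    let e : Lp ℝ 2 ν := (memLp_const (1 : ℝ)).toLp _
    have he : e =ᵐ[ν] fun _ => (1 : ℝ) := MemLp.coeFn_toLp _
    have hPe : P h e =ᵐ[ν] (Set.Ici h).indicator fun _ => (1 : ℝ) := by
      filter_upwards [hP h e, he] with a h1 h2
      rw [h1, h2]
      simp [Set.indicator_apply]
    have hpos : ∀ a, 0 < ∫ y, K a y * P h e y ∂ν := fun a => by
      have hnn : ∀ᵐ y ∂ν, 0 ≤ K a y * P h e y := by
        filter_upwards [hPe] with y hy
        rw [hy]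
        exact mul_nonneg (hK0 a y).le (Set.indicator_nonneg (fun _ _ => zero_le_one) _)
      rw [integral_pos_iff_support_of_nonneg_ae hnn (hKf a _)]
      have h1 : 0 < ν (Set.Ioo h (h + 1)) := (Measure.measure_Ioo_pos ν).2 (by linarith)
      refine h1.trans_le (measure_mono_ae ?_)
      filter_upwards [hPe] with y hy hyI
      change K a y * P h e y ≠ 0
      rw [hy, Set.indicator_of_mem (show y ∈ Set.Ici h from hyI.1.le)]
      simpa using (hK0 a y).ne'
    have hz : T e =ᵐ[ν] fun _ => (0 : ℝ) := by
      rw [h0]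
      exact Lp.coeFn_zero _ _ _
    have h1 : 0 < ν (Set.Ioo h (h + 1)) := (Measure.measure_Ioo_pos ν).2 (by linarith)
    refine h1.ne' (measure_mono_null (t := {a | ¬ T e a = if h ≤ a then
      ∫ y, K a y * P h e y ∂ν else 0} ∪ {a | ¬ T e a = 0}) (fun a ha => ?_)
      (measure_union_null (hT e) hz))
    by_contra! hcon
    simp only [Set.mem_union, Set.mem_ofPred_eq, not_or, not_not] at hcon
    rw [hcon.2, if_pos ha.1.le] at hcon
    exact (hpos a).ne hcon.1
  set W := (eLpNorm w 2 ν).toReal with hW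
  have hW0 : 0 ≤ W := ENNReal.toReal_nonneg
  set A := C * W with hA
  have hA0 : 0 ≤ A := mul_nonneg hC hW0
  obtain ⟨M, hM1, hM⟩ : ∃ M : ℝ, 0 < M ∧
      eLpNorm ({y | M ≤ ‖w y‖₊}.indicator w) 2 ν ≤ ENNReal.ofReal (‖T‖ / (4 * (A + 1))) :=
    hw.eLpNorm_indicator_norm_ge_pos_le hwm.stronglyMeasurable (by positivity)
  set ε := ‖T‖ / (4 * (A + 1)) with hε
  have hε0 : 0 < ε := by positivity
  set S := {y | M ≤ ‖w y‖₊} with hS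
  have hSm : MeasurableSet S := by
    have : S = {y | M ≤ w y} := by
      ext y
      simp [hS, abs_of_nonneg (hw0 y)]
    rw [this]
    exact measurableSet_le measurable_const hwm
  have hSw : ∀ y, y ∉ S → w y < M := fun y hy => by
    simpa [hS, abs_of_nonneg (hw0 y)] using hy
  obtain ⟨k, hk, hkK⟩ := hlow b h M
  set j := ‖T‖ / (4 * (A + 1) * M) with hj
  have hj0 : 0 < j := by positivity
  have hG : 0 < ν.real (Set.Ioo b h) :=
    ENNReal.toReal_pos ((Measure.measure_Ioo_pos ν).2 hbh).ne' (measure_ne_top _ _)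
  -- functions nearly attaining the norm of `T` gain a fixed amount from the larger half-line
  have key : ∀ f : Lp ℝ 2 ν, ‖f‖ ≤ 1 → ‖T‖ / 2 ≤ ‖T f‖ →
      ‖T f‖ ^ 2 + (k * j) ^ 2 * ν.real (Set.Ioo b h) ≤ ‖T'‖ ^ 2 := by
    intro f hf1 hfT
    set g : Lp ℝ 2 ν := |P h f| with hg
    have hg1 : ‖g‖ ≤ 1 := by
      rw [hg, norm_abs_eq_norm]
      exact (hPle f).trans hf1
    have hgf : g =ᵐ[ν] fun y => |P h f y| := Lp.coeFn_abs _
    have hg0 : ∀ᵐ y ∂ν, 0 ≤ g y := by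
      filter_upwards [hgf] with y hy
      rw [hy]
      positivity
    have hPg : P b g = g := by
      refine Lp.ext ?_
      filter_upwards [hP b g, hgf, hP h f] with a h1 h2 h3
      rw [h1, h2, h3]
      split_ifs with h4 h5 h5
      · rfl
      · rfl
      · exact absurd (hbh.le.trans h5) h4
      · simp
    have hT' : T' g =ᵐ[ν] fun a => if b ≤ a then ∫ y, K a y * g y ∂ν else 0 := by
      filter_upwards [hP b (Q g), hQ g] with a h1 h2
      rw [hTdef']
      simp only [ContinuousLinearMap.comp_apply]
      rw [hPg, h1, h2]
    have habs : ∀ a, |∫ y, K a y * P h f y ∂ν| ≤ ∫ y, K a y * g y ∂ν := fun a => by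
      refine (abs_integral_le_integral_abs).trans_eq (integral_congr_ae ?_)
      filter_upwards [hgf] with y hy
      rw [hy, abs_mul, abs_of_pos (hK0 a y)]
    set I := ∫ y, w y * g y ∂ν with hI
    have hI0 : 0 ≤ I := integral_nonneg_of_ae (by
      filter_upwards [hg0] with y hy using mul_nonneg (hw0 y) hy)
    set J := ∫ y in Sᶜ, g y ∂ν with hJ
    have hgi : Integrable g ν := (Lp.memLp g).integrable (by norm_num)
    have hup : ∀ a, ∫ y, K a y * g y ∂ν ≤ C * w a * I := fun a => by
      rw [hI, ← integral_const_mul]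
      refine integral_mono_ae (hKf a g) ((hw.integrable_mul_Lp_two g).const_mul _) ?_
      filter_upwards [hg0] with y hy
      calc K a y * g y ≤ C * (w a * w y) * g y := mul_le_mul_of_nonneg_right (hKw a y) hy
        _ = _ := by ring
    have hTI : ‖T f‖ ≤ A * I := by
      have h1 : ‖T f‖ ≤ C * I * ‖hw.toLp w‖ := by
        refine Lp.norm_le_mul_norm_of_ae_le_mul ?_
        filter_upwards [hT f, hw.coeFn_toLp] with a h1 h2
        rw [h1, h2, Real.norm_eq_abs, Real.norm_eq_abs, abs_of_nonneg (hw0 a)]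
        split_ifs
        · exact ((habs a).trans (hup a)).trans_eq (by ring)
        · rw [abs_zero]
          exact mul_nonneg (mul_nonneg hC hI0) (hw0 a)
      rw [Lp.norm_toLp] at h1
      exact h1.trans_eq (by rw [hA]; ring)
    have hIJ : I ≤ M * J + ε := by
      have hwS : MemLp (S.indicator w) 2 ν := hw.indicator hSm
      have h1 : ∫ y, S.indicator w y * g y ∂ν ≤ ε := by
        refine (integral_mul_le_eLpNorm_mul_norm hwS g).trans ?_
        have h2 : (eLpNorm (S.indicator w) 2 ν).toReal ≤ ε :=
          ENNReal.toReal_le_of_le_ofReal hε0.le hM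
        calc _ ≤ ε * 1 := mul_le_mul h2 hg1 (norm_nonneg _) hε0.le
          _ = ε := mul_one _
      have h2 : I ≤ ∫ y, (M * Sᶜ.indicator g y + S.indicator w y * g y) ∂ν := by
        refine integral_mono_ae (hw.integrable_mul_Lp_two g)
          (((hgi.indicator hSm.compl).const_mul M).add (hwS.integrable_mul_Lp_two g)) ?_
        filter_upwards [hg0] with y hy
        by_cases hyS : y ∈ S
        · simp [hyS]
        · simpa [hyS] using mul_le_mul_of_nonneg_right (hSw y hyS).le hy
      rw [integral_add ((hgi.indicator hSm.compl).const_mul M) (hwS.integrable_mul_Lp_two g),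
        integral_const_mul, integral_indicator hSm.compl] at h2
      linarith
    have hjJ : j ≤ J := by
      have h1 : ‖T‖ / 2 ≤ (A + 1) * (M * J + ε) :=
        hfT.trans (hTI.trans (mul_le_mul (by linarith) hIJ hI0 (by positivity)))
      have h2 : (A + 1) * ε = ‖T‖ / 4 := by
        rw [hε]
        field_simp
      rw [hj, div_le_iff₀ (by positivity)]
      nlinarith
    have hdown : ∀ a ∈ Set.Ioo b h, k * j ≤ ∫ y, K a y * g y ∂ν := fun a ha => by
      calc k * j ≤ k * J := mul_le_mul_of_nonneg_left hjJ hk.le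
        _ = ∫ y, k * Sᶜ.indicator g y ∂ν := by
          rw [integral_const_mul, integral_indicator hSm.compl]
        _ ≤ _ := by
          refine integral_mono_ae ((hgi.indicator hSm.compl).const_mul k) (hKf a g) ?_
          filter_upwards [hg0] with y hy
          by_cases hyS : y ∈ S
          · simpa [hyS] using mul_nonneg (hK0 a y).le hy
          · simpa [hyS] using mul_le_mul_of_nonneg_right (hkK a ha y (hSw y hyS)) hy
    have hT'g : ‖T' g‖ ≤ ‖T'‖ :=
      (T'.le_opNorm g).trans (mul_le_of_le_one_right (norm_nonneg _) hg1)
    refine le_trans ?_ (pow_le_pow_left₀ (norm_nonneg _) hT'g 2)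
    refine norm_sq_add_mul_measureReal_le measurableSet_Ioo ?_
    filter_upwards [hT f, hT'] with a h1 h2
    rw [h1, h2]
    by_cases hha : h ≤ a
    · rw [if_pos hha, if_pos (hbh.le.trans hha), Set.indicator_of_notMem fun hm => hm.2.not_ge hha,
        add_zero, ← sq_abs]
      exact pow_le_pow_left₀ (abs_nonneg _) (habs a) 2
    · rw [if_neg hha]
      by_cases hba : a ∈ Set.Ioo b h
      · rw [Set.indicator_of_mem hba, if_pos hba.1.le]
        simpa using pow_le_pow_left₀ (by positivity) (hdown a hba) 2
      · rw [Set.indicator_of_notMem hba]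
        rw [add_zero, zero_pow two_ne_zero]
        exact sq_nonneg _
  set δ := (k * j) ^ 2 * ν.real (Set.Ioo b h) with hδ
  have hδ0 : 0 < δ := by positivity
  by_contra! hle
  obtain ⟨r, hr0, hr1⟩ : ∃ r, max (‖T‖ / 2) √(max (‖T‖ ^ 2 - δ) 0) < r ∧ r < ‖T‖ := by
    refine exists_between (max_lt (by linarith) ?_)
    rw [Real.sqrt_lt' hTpos]
    exact max_lt (by linarith) (by positivity)
  obtain ⟨f, hf1, hf⟩ := T.exists_lt_apply_of_lt_opNorm hr1
  have h1 := key f hf1.le (((le_max_left _ _).trans_lt hr0).trans hf).le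
  have h2 := ((le_max_right _ _).trans_lt hr0).trans hf
  rw [Real.sqrt_lt' ((norm_nonneg _).lt_of_ne' fun h0 => by
    rw [h0] at h2
    exact h2.not_ge (Real.sqrt_nonneg _))] at h2
  have h3 := (le_max_left _ _).trans_lt h2
  have h4 := pow_le_pow_left₀ (norm_nonneg _) hle 2
  linarith

end PositiveKernel

section Mehler

open scoped NNReal

/-- The density of the Gaussian law `N(ρ a, (1 - ρ ^ 2) v)` with respect to `N(0, v)`. -/
noncomputable def mehlerKernel (ρ v a y : ℝ) : ℝ :=
  (√(1 - ρ ^ 2))⁻¹ * Real.exp ((2 * ρ * a * y - ρ ^ 2 * (a ^ 2 + y ^ 2)) / (2 * (1 - ρ ^ 2) * v))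

lemma measurable_mehlerKernel (ρ v a : ℝ) : Measurable (mehlerKernel ρ v a) := by
  unfold mehlerKernel
  fun_prop

lemma mehlerKernel_pos {ρ : ℝ} (hρ : ρ ^ 2 < 1) (v a y : ℝ) : 0 < mehlerKernel ρ v a y :=
  mul_pos (inv_pos.2 (Real.sqrt_pos.2 (sub_pos.2 hρ))) (Real.exp_pos _)

lemma gaussianPDFReal_eq_mehlerKernel_mul {ρ : ℝ} (hρ : ρ ^ 2 < 1) {v u : ℝ≥0} (hv : v ≠ 0)
    (hu : (u : ℝ) = (1 - ρ ^ 2) * v) (a y : ℝ) :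
    gaussianPDFReal (ρ * a) u y = gaussianPDFReal 0 v y * mehlerKernel ρ v a y := by
  have hρ' : 0 < 1 - ρ ^ 2 := sub_pos.2 hρ
  have hv' : (v : ℝ) ≠ 0 := by exact_mod_cast hv
  rw [gaussianPDFReal, gaussianPDFReal, mehlerKernel, hu,
    mul_mul_mul_comm (√(2 * Real.pi * v))⁻¹, ← Real.exp_add,
    ← mul_inv, ← Real.sqrt_mul (by positivity)]
  congr 1
  · congr 2
    ring
  · congr 1
    field_simp
    ring

lemma integral_comp_gaussianReal_eq_integral_mehlerKernel {ρ : ℝ} (hρ : ρ ^ 2 < 1) {v : ℝ≥0}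
    (hv : v ≠ 0) (f : ℝ → ℝ) (a : ℝ) :
    ∫ y, f (ρ * a + √(1 - ρ ^ 2) * y) ∂gaussianReal 0 v =
      ∫ y, mehlerKernel ρ v a y * f y ∂gaussianReal 0 v := by
  have hρ' : 0 < 1 - ρ ^ 2 := sub_pos.2 hρ
  have hs : √(1 - ρ ^ 2) ≠ 0 := (Real.sqrt_pos.2 hρ').ne'
  have h1 : ∀ g : ℝ → ℝ, ∫ y, g (√(1 - ρ ^ 2) * y) ∂gaussianReal 0 v =
      ∫ y, g y ∂gaussianReal 0 (NNReal.mk (√(1 - ρ ^ 2) ^ 2) (sq_nonneg _) * v) := fun g => by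
    rw [← (measurableEmbedding_mulLeft₀ hs).integral_map, gaussianReal_map_const_mul, mul_zero]
  set u : ℝ≥0 := NNReal.mk (√(1 - ρ ^ 2) ^ 2) (sq_nonneg _) * v with hu
  have hu' : (u : ℝ) = (1 - ρ ^ 2) * v := by
    rw [hu, NNReal.coe_mul, NNReal.coe_mk, Real.sq_sqrt hρ'.le]
  have hu0 : u ≠ 0 := by
    have h : (u : ℝ) ≠ 0 := by
      rw [hu']
      exact mul_ne_zero hρ'.ne' (by exact_mod_cast hv)
    exact_mod_cast h
  have h2 : ∫ y, f (ρ * a + y) ∂gaussianReal 0 u = ∫ y, f y ∂gaussianReal (ρ * a) u := by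
    rw [← (measurableEmbedding_addLeft (ρ * a)).integral_map, gaussianReal_map_const_add, zero_add]
  rw [h1 fun z => f (ρ * a + z), h2, integral_gaussianReal_eq_integral_smul hu0,
    integral_gaussianReal_eq_integral_smul hv]
  refine integral_congr_ae (Filter.Eventually.of_forall fun y => ?_)
  simp only [smul_eq_mul]
  rw [gaussianPDFReal_eq_mehlerKernel_mul hρ hv hu', mul_assoc]

lemma mehlerKernel_le {ρ : ℝ} (hρ0 : 0 < ρ) (hρ1 : ρ < 1) {v : ℝ} (hv : 0 < v) (a y : ℝ) :
    mehlerKernel ρ v a y ≤ (√(1 - ρ ^ 2))⁻¹ *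
      (Real.exp (ρ / (2 * (1 + ρ) * v) * a ^ 2) * Real.exp (ρ / (2 * (1 + ρ) * v) * y ^ 2)) := by
  have h1 : 0 < 1 - ρ := sub_pos.2 hρ1
  rw [mehlerKernel, ← Real.exp_add, show 1 - ρ ^ 2 = (1 - ρ) * (1 + ρ) by ring]
  refine mul_le_mul_of_nonneg_left (Real.exp_le_exp.2 ?_) (by positivity)
  rw [div_le_iff₀ (by positivity)]
  have h2 : (ρ / (2 * (1 + ρ) * v) * a ^ 2 + ρ / (2 * (1 + ρ) * v) * y ^ 2) *
      (2 * ((1 - ρ) * (1 + ρ)) * v) = ρ * (1 - ρ) * (a ^ 2 + y ^ 2) := by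
    field_simp
  rw [h2]
  nlinarith [mul_nonneg hρ0.le (sq_nonneg (a - y))]

lemma le_mehlerKernel {ρ : ℝ} (hρ0 : 0 < ρ) (hρ1 : ρ < 1) {v : ℝ} (hv : 0 < v) {a y R : ℝ}
    (hR : a ^ 2 + y ^ 2 ≤ R) :
    (√(1 - ρ ^ 2))⁻¹ * Real.exp (-(ρ + ρ ^ 2) * R / (2 * (1 - ρ ^ 2) * v)) ≤
      mehlerKernel ρ v a y := by
  have h1 : 0 < 1 - ρ ^ 2 := by nlinarith
  refine mul_le_mul_of_nonneg_left (Real.exp_le_exp.2 ?_) (by positivity)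
  refine div_le_div_of_nonneg_right ?_ (by positivity)
  nlinarith [mul_nonneg hρ0.le (sq_nonneg (a + y)),
    mul_le_mul_of_nonneg_left hR (show 0 ≤ ρ + ρ ^ 2 by positivity)]

lemma memLp_two_exp_mul_sq_gaussianReal {v : ℝ≥0} (hv : v ≠ 0) {β : ℝ} (hβ : 4 * β * v < 1) :
    MemLp (fun y => Real.exp (β * y ^ 2)) 2 (gaussianReal 0 v) := by
  have hv' : (0 : ℝ) < v := by exact_mod_cast pos_iff_ne_zero.2 hv
  rw [memLp_two_iff_integrable_sq (by fun_prop), gaussianReal_of_var_ne_zero _ hv,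
    integrable_withDensity_iff_integrable_smul' (measurable_gaussianPDF 0 v)
      (Filter.Eventually.of_forall fun _ => gaussianPDF_lt_top)]
  have hb : 0 < 1 / (2 * v) - 2 * β := by
    rw [sub_pos, lt_div_iff₀ (by positivity)]
    linarith
  refine ((integrable_exp_neg_mul_sq hb).const_mul (√(2 * Real.pi * v))⁻¹).congr
    (Filter.Eventually.of_forall fun y => ?_)
  simp only [toReal_gaussianPDF, smul_eq_mul, gaussianPDFReal]
  rw [mul_assoc (√(2 * Real.pi * v))⁻¹, ← Real.exp_nat_mul, ← Real.exp_add]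
  congr 2
  push_cast
  ring

lemma isOpenPosMeasure_gaussianReal (m : ℝ) {v : ℝ≥0} (hv : v ≠ 0) :
    (gaussianReal m v).IsOpenPosMeasure :=
  (gaussianReal_absolutelyContinuous' m hv).isOpenPosMeasure

end Mehler

/-- The function h ↦ λ_h = ‖π_h (dQ_{log d}) π_h‖ on L²(ν) is strictly
decreasing on ℝ. -/
theorem stmt_9 (d : ℕ) (hd : 2 ≤ d)
    (ν : Measure ℝ) (hν : ν = gaussianReal 0 (Real.toNNReal ((d : ℝ) / ((d : ℝ) ^ 2 - 1))))
    (Q : Lp ℝ 2 ν →L[ℝ] Lp ℝ 2 ν)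
    (hQ : ∀ f : Lp ℝ 2 ν, (Q f : ℝ → ℝ) =ᵐ[ν]
      fun a => ∫ y, (f : ℝ → ℝ) (a / d + Real.sqrt (1 - 1 / (d : ℝ) ^ 2) * y) ∂ν)
    (Ph : ℝ → (Lp ℝ 2 ν →L[ℝ] Lp ℝ 2 ν))
    (hPh : ∀ (h : ℝ) (f : Lp ℝ 2 ν), (Ph h f : ℝ → ℝ) =ᵐ[ν]
      fun a => if h ≤ a then (f : ℝ → ℝ) a else 0) :
    StrictAnti (fun h : ℝ => ‖Ph h ∘L ((d : ℝ) • Q) ∘L Ph h‖) := by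
  have hd' : (2 : ℝ) ≤ d := by exact_mod_cast hd
  have hd0 : (0 : ℝ) < d := by linarith
  set ρ : ℝ := 1 / d with hρ
  have hρ0 : 0 < ρ := by positivity
  have hρ1 : ρ < 1 := by
    rw [hρ, div_lt_one hd0]
    linarith
  have hρ2 : ρ ^ 2 < 1 := by nlinarith
  have hvpos : 0 < (d : ℝ) / ((d : ℝ) ^ 2 - 1) := div_pos hd0 (by nlinarith)
  set v := Real.toNNReal ((d : ℝ) / ((d : ℝ) ^ 2 - 1))
  have hv' : (0 : ℝ) < v := NNReal.coe_pos.2 (Real.toNNReal_pos.2 hvpos)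
  have hv : v ≠ 0 := by exact_mod_cast hv'.ne'
  subst hν
  have := isOpenPosMeasure_gaussianReal 0 hv
  have hQK : ∀ f : Lp ℝ 2 (gaussianReal 0 v), Q f =ᵐ[gaussianReal 0 v]
      fun a => ∫ y, mehlerKernel ρ v a y * f y ∂gaussianReal 0 v := fun f => by
    filter_upwards [hQ f] with a ha
    rw [ha, ← integral_comp_gaussianReal_eq_integral_mehlerKernel hρ2 hv]
    simp only [hρ, div_pow, one_pow, div_mul_eq_mul_div, one_mul]
  have hβ : 4 * (ρ / (2 * (1 + ρ) * v)) * v < 1 := by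
    have h1 : 4 * (ρ / (2 * (1 + ρ) * v)) * v = 2 * ρ / (1 + ρ) := by
      field_simp
      ring
    rw [h1, div_lt_one (by positivity)]
    linarith
  have hlow : ∀ b c M : ℝ, ∃ k > 0, ∀ a ∈ Set.Ioo b c, ∀ y,
      Real.exp (ρ / (2 * (1 + ρ) * v) * y ^ 2) < M → k ≤ mehlerKernel ρ v a y := by
    intro b c M
    refine ⟨(√(1 - ρ ^ 2))⁻¹ * Real.exp (-(ρ + ρ ^ 2) * (b ^ 2 + c ^ 2 +
      Real.log M / (ρ / (2 * (1 + ρ) * v))) / (2 * (1 - ρ ^ 2) * v)),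
      mul_pos (inv_pos.2 (Real.sqrt_pos.2 (sub_pos.2 hρ2))) (Real.exp_pos _),
      fun a ha y hy => le_mehlerKernel hρ0 hρ1 hv' (add_le_add ?_ ?_)⟩
    · rcases le_total 0 a with h | h
      · nlinarith [ha.2, sq_nonneg b]
      · nlinarith [ha.1, sq_nonneg c]
    · rw [le_div_iff₀ (by positivity), mul_comm]
      exact ((Real.lt_log_iff_exp_lt ((Real.exp_pos _).trans hy)).2 hy).le
  have hanti := strictAnti_norm_truncation (measurable_mehlerKernel ρ v)
    (mehlerKernel_pos hρ2 v) (inv_nonneg.2 (Real.sqrt_nonneg _)) (mehlerKernel_le hρ0 hρ1 hv')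
    (fun y => (Real.exp_pos _).le) (by fun_prop) (memLp_two_exp_mul_sq_gaussianReal hv hβ)
    hlow hQK hPh
  intro b c hbc
  simp only [ContinuousLinearMap.smul_comp, ContinuousLinearMap.comp_smul, norm_smul]
  exact mul_lt_mul_of_pos_left (hanti hbc) (norm_pos_iff.2 hd0.ne')
end

section
/- The function h ↦ λ_h = ‖π_h (dQ_{log d}) π_h‖_{L²(ν)→L²(ν)} is continuous on ℝ, with lim_{h→−∞} λ_h = d and lim_{h→+∞} λ_h = 0. Consequently h ↦ λ_h is a decreasing homeomorphism from ℝ onto (0, d). -/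
open MeasureTheory ProbabilityTheory

/-- `Q` is an integral operator on `L²(ν)` with a positive continuous kernel `k`
dominated by the rank-one kernel `ψ ⊗ ψ`, where `ψ ∈ L²(ν)`. -/
structure IsDominatedIntegralOperator (ν : Measure ℝ) (Q : Lp ℝ 2 ν →L[ℝ] Lp ℝ 2 ν)
    (k : ℝ → ℝ → ℝ) (ψ : ℝ → ℝ) : Prop where
  apply_ae : ∀ f : Lp ℝ 2 ν, (Q f : ℝ → ℝ) =ᵐ[ν] fun a => ∫ z, k a z * (f : ℝ → ℝ) z ∂ν
  continuous_kernel : Continuous fun p : ℝ × ℝ => k p.1 p.2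
  kernel_pos : ∀ a z, 0 < k a z
  kernel_le : ∀ a z, k a z ≤ ψ a * ψ z
  continuous_weight : Continuous ψ
  weight_pos : ∀ a, 0 < ψ a
  memLp : MemLp ψ 2 ν

/-- `D` acts on `L²(ν)` as multiplication by the function `m`. -/
def IsMultiplication {ν : Measure ℝ} (D : Lp ℝ 2 ν →L[ℝ] Lp ℝ 2 ν) (m : ℝ → ℝ) : Prop :=
  ∀ f : Lp ℝ 2 ν, (D f : ℝ → ℝ) =ᵐ[ν] fun a => m a * (f : ℝ → ℝ) a

namespace IsMultiplication

variable {ν : Measure ℝ} {D E : Lp ℝ 2 ν →L[ℝ] Lp ℝ 2 ν} {m n : ℝ → ℝ}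

lemma sub (hD : IsMultiplication D m) (hE : IsMultiplication E n) :
    IsMultiplication (D - E) (fun a => m a - n a) := by
  intro f
  rw [_root_.sub_apply]
  filter_upwards [Lp.coeFn_sub (D f) (E f), hD f, hE f] with a h1 h2 h3
  rw [h1, Pi.sub_apply, h2, h3, sub_mul]

lemma norm_apply_le (hD : IsMultiplication D m) (hm : ∀ a, |m a| ≤ 1) (f : Lp ℝ 2 ν) :
    ‖D f‖ ≤ ‖f‖ := by
  refine Lp.norm_le_norm_of_ae_le ?_
  filter_upwards [hD f] with a ha
  rw [ha, norm_mul]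
  exact mul_le_of_le_one_left (norm_nonneg _) (hm a)

lemma opNorm_le_one (hD : IsMultiplication D m) (hm : ∀ a, |m a| ≤ 1) : ‖D‖ ≤ 1 :=
  D.opNorm_le_bound zero_le_one fun f => by simpa using hD.norm_apply_le hm f

lemma id : IsMultiplication (ContinuousLinearMap.id ℝ (Lp ℝ 2 ν)) (fun _ => 1) :=
  fun f => ae_of_all _ fun a => by simp

lemma zero : IsMultiplication (0 : Lp ℝ 2 ν →L[ℝ] Lp ℝ 2 ν) (fun _ => 0) := fun f => by
  filter_upwards [Lp.coeFn_zero ℝ 2 ν] with a ha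
  rw [zero_mul]
  exact ha

end IsMultiplication

/-- The square of the norm in `L²` as an integral. -/
lemma norm_sq_eq_integral_sq {ν : Measure ℝ} (f : Lp ℝ 2 ν) :
    ‖f‖ ^ 2 = ∫ a, (f : ℝ → ℝ) a ^ 2 ∂ν := by
  rw [← real_inner_self_eq_norm_sq, L2.inner_def]
  simp [sq]

/-- Taking absolute values preserves the norm of `L²`. -/
lemma norm_abs_Lp {ν : Measure ℝ} (f : Lp ℝ 2 ν) : ‖|f|‖ = ‖f‖ := by
  refine le_antisymm (Lp.norm_le_norm_of_ae_le ?_) (Lp.norm_le_norm_of_ae_le ?_) <;>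
  · filter_upwards [Lp.coeFn_abs f] with a ha
    simp [ha]

namespace IsDominatedIntegralOperator

variable {ν : Measure ℝ} {Q : Lp ℝ 2 ν →L[ℝ] Lp ℝ 2 ν} {k : ℝ → ℝ → ℝ} {ψ : ℝ → ℝ}

/-- The dominating function as an element of `L²`. -/
noncomputable def weight (hQ : IsDominatedIntegralOperator ν Q k ψ) : Lp ℝ 2 ν :=
  hQ.memLp.toLp ψ

lemma coeFn_weight (hQ : IsDominatedIntegralOperator ν Q k ψ) :
    (hQ.weight : ℝ → ℝ) =ᵐ[ν] ψ := hQ.memLp.coeFn_toLp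

lemma integrable_weight_mul (hQ : IsDominatedIntegralOperator ν Q k ψ) (f : Lp ℝ 2 ν) :
    Integrable (fun z => ψ z * (f : ℝ → ℝ) z) ν :=
  MemLp.integrable_mul (p := 2) (q := 2) hQ.memLp (Lp.memLp f)

lemma inner_weight (hQ : IsDominatedIntegralOperator ν Q k ψ) (f : Lp ℝ 2 ν) :
    inner ℝ hQ.weight f = ∫ z, ψ z * (f : ℝ → ℝ) z ∂ν := by
  rw [L2.inner_def]
  refine integral_congr_ae ?_
  filter_upwards [hQ.coeFn_weight] with z hz
  simp [hz, mul_comm]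

lemma integrable_weight_mul_abs (hQ : IsDominatedIntegralOperator ν Q k ψ) (f : Lp ℝ 2 ν) :
    Integrable (fun z => ψ z * |(f : ℝ → ℝ) z|) ν := by
  refine (hQ.integrable_weight_mul |f|).congr ?_
  filter_upwards [Lp.coeFn_abs f] with z hz
  rw [hz]

lemma inner_weight_abs (hQ : IsDominatedIntegralOperator ν Q k ψ) (f : Lp ℝ 2 ν) :
    inner ℝ hQ.weight |f| = ∫ z, ψ z * |(f : ℝ → ℝ) z| ∂ν := by
  rw [hQ.inner_weight]
  refine integral_congr_ae ?_
  filter_upwards [Lp.coeFn_abs f] with z hz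
  rw [hz]

lemma integrable_kernel_mul (hQ : IsDominatedIntegralOperator ν Q k ψ) (a : ℝ) (f : Lp ℝ 2 ν) :
    Integrable (fun z => k a z * (f : ℝ → ℝ) z) ν := by
  have hc : Continuous (k a) := hQ.continuous_kernel.comp (by fun_prop : Continuous fun z => (a, z))
  refine ((hQ.integrable_weight_mul_abs f).const_mul (ψ a)).mono'
    (hc.aestronglyMeasurable.mul (Lp.aestronglyMeasurable f)) (ae_of_all _ fun z => ?_)
  rw [norm_mul, Real.norm_of_nonneg (hQ.kernel_pos a z).le, ← mul_assoc]
  exact mul_le_mul_of_nonneg_right (hQ.kernel_le a z) (abs_nonneg _)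

lemma abs_apply_le (hQ : IsDominatedIntegralOperator ν Q k ψ) (f : Lp ℝ 2 ν) :
    ∀ᵐ a ∂ν, |(Q f : ℝ → ℝ) a| ≤ ψ a * inner ℝ hQ.weight |f| := by
  filter_upwards [hQ.apply_ae f] with a ha
  rw [ha, hQ.inner_weight_abs, ← integral_const_mul, ← Real.norm_eq_abs]
  refine norm_integral_le_of_norm_le ((hQ.integrable_weight_mul_abs f).const_mul (ψ a))
    (ae_of_all _ fun z => ?_)
  rw [norm_mul, Real.norm_of_nonneg (hQ.kernel_pos a z).le, ← mul_assoc]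
  exact mul_le_mul_of_nonneg_right (hQ.kernel_le a z) (abs_nonneg _)

lemma inner_weight_abs_nonneg (hQ : IsDominatedIntegralOperator ν Q k ψ) (f : Lp ℝ 2 ν) :
    0 ≤ inner ℝ hQ.weight |f| := by
  rw [hQ.inner_weight_abs]
  exact integral_nonneg fun z => mul_nonneg (hQ.weight_pos z).le (abs_nonneg _)

lemma inner_weight_abs_le (hQ : IsDominatedIntegralOperator ν Q k ψ) (f : Lp ℝ 2 ν) :
    inner ℝ hQ.weight |f| ≤ ‖hQ.weight‖ * ‖f‖ := by
  simpa [norm_abs_Lp] using real_inner_le_norm hQ.weight |f|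

lemma norm_apply_le (hQ : IsDominatedIntegralOperator ν Q k ψ) (f : Lp ℝ 2 ν) :
    ‖Q f‖ ≤ inner ℝ hQ.weight |f| * ‖hQ.weight‖ := by
  refine Lp.norm_le_mul_norm_of_ae_le_mul ?_
  filter_upwards [hQ.abs_apply_le f, hQ.coeFn_weight] with a h1 h2
  rw [h2, Real.norm_eq_abs, Real.norm_of_nonneg (hQ.weight_pos a).le, mul_comm]
  exact h1

lemma norm_mul_apply_le (hQ : IsDominatedIntegralOperator ν Q k ψ)
    {D : Lp ℝ 2 ν →L[ℝ] Lp ℝ 2 ν} {m : ℝ → ℝ} (hD : IsMultiplication D m) (f : Lp ℝ 2 ν) :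
    ‖D (Q f)‖ ≤ inner ℝ hQ.weight |f| * ‖D hQ.weight‖ := by
  refine Lp.norm_le_mul_norm_of_ae_le_mul ?_
  filter_upwards [hQ.abs_apply_le f, hQ.coeFn_weight, hD (Q f), hD hQ.weight] with a h1 h2 h3 h4
  rw [h3, h4, h2, norm_mul, norm_mul, Real.norm_of_nonneg (hQ.weight_pos a).le,
    mul_left_comm, mul_comm (inner ℝ _ _)]
  exact mul_le_mul_of_nonneg_left h1 (norm_nonneg _)

lemma opNorm_mul_comp_le (hQ : IsDominatedIntegralOperator ν Q k ψ)
    {D : Lp ℝ 2 ν →L[ℝ] Lp ℝ 2 ν} {m : ℝ → ℝ} (hD : IsMultiplication D m) :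
    ‖D ∘L Q‖ ≤ ‖hQ.weight‖ * ‖D hQ.weight‖ := by
  refine ContinuousLinearMap.opNorm_le_bound _ (by positivity) fun f => ?_
  calc ‖D (Q f)‖ ≤ inner ℝ hQ.weight |f| * ‖D hQ.weight‖ := hQ.norm_mul_apply_le hD f
    _ ≤ (‖hQ.weight‖ * ‖f‖) * ‖D hQ.weight‖ := by gcongr; exact hQ.inner_weight_abs_le f
    _ = _ := by ring

lemma inner_weight_abs_mul_le (hQ : IsDominatedIntegralOperator ν Q k ψ)
    {D : Lp ℝ 2 ν →L[ℝ] Lp ℝ 2 ν} {m : ℝ → ℝ} (hD : IsMultiplication D m) (f : Lp ℝ 2 ν) :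
    inner ℝ hQ.weight |D f| ≤ ‖D hQ.weight‖ * ‖f‖ := by
  have h : inner ℝ hQ.weight |D f| = inner ℝ |D hQ.weight| |f| := by
    rw [L2.inner_def, L2.inner_def]
    refine integral_congr_ae ?_
    filter_upwards [hQ.coeFn_weight, Lp.coeFn_abs (D f), hD f, Lp.coeFn_abs (D hQ.weight),
      hD hQ.weight, Lp.coeFn_abs f] with z h1 h2 h3 h4 h5 h6
    simp only [h1, h2, h3, h4, h5, h6, abs_mul, abs_of_pos (hQ.weight_pos z), RCLike.inner_apply,
      conj_trivial]
    ring
  rw [h]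
  simpa [norm_abs_Lp] using real_inner_le_norm |D hQ.weight| |f|

lemma opNorm_comp_mul_le (hQ : IsDominatedIntegralOperator ν Q k ψ)
    {D : Lp ℝ 2 ν →L[ℝ] Lp ℝ 2 ν} {m : ℝ → ℝ} (hD : IsMultiplication D m) :
    ‖Q ∘L D‖ ≤ ‖hQ.weight‖ * ‖D hQ.weight‖ := by
  refine ContinuousLinearMap.opNorm_le_bound _ (by positivity) fun f => ?_
  calc ‖Q (D f)‖ ≤ inner ℝ hQ.weight |D f| * ‖hQ.weight‖ := hQ.norm_apply_le (D f)
    _ ≤ (‖D hQ.weight‖ * ‖f‖) * ‖hQ.weight‖ := by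
        gcongr; exact hQ.inner_weight_abs_mul_le hD f
    _ = _ := by ring

/-- Compressing a dominated integral operator by multiplication operators is continuous for strong
convergence of the multiplication operators. -/
lemma tendsto_norm_compression (hQ : IsDominatedIntegralOperator ν Q k ψ) {ι : Type*}
    {l : Filter ι} {P : ι → Lp ℝ 2 ν →L[ℝ] Lp ℝ 2 ν} {m : ι → ℝ → ℝ}
    (hP : ∀ i, IsMultiplication (P i) (m i)) (hm : ∀ i a, |m i a| ≤ 1)
    {G : Lp ℝ 2 ν →L[ℝ] Lp ℝ 2 ν} {n : ℝ → ℝ} (hG : IsMultiplication G n) (hn : ∀ a, |n a| ≤ 1)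
    (h : Filter.Tendsto (fun i => P i hQ.weight) l (nhds (G hQ.weight))) :
    Filter.Tendsto (fun i => ‖P i ∘L Q ∘L P i‖) l (nhds ‖G ∘L Q ∘L G‖) := by
  refine Filter.Tendsto.norm ?_
  rw [tendsto_iff_norm_sub_tendsto_zero] at h ⊢
  have h0 := h.const_mul (2 * ‖hQ.weight‖)
  rw [mul_zero] at h0
  refine squeeze_zero (fun _ => norm_nonneg _) (fun i => ?_) h0
  have hD := (hP i).sub hG
  have hsplit : P i ∘L Q ∘L P i - G ∘L Q ∘L G
      = ((P i - G) ∘L Q) ∘L P i + G ∘L (Q ∘L (P i - G)) := by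
    ext1 f; simp
  rw [hsplit, ← _root_.sub_apply]
  calc _ ≤ ‖((P i - G) ∘L Q) ∘L P i‖ + ‖G ∘L (Q ∘L (P i - G))‖ := norm_add_le _ _
    _ ≤ ‖(P i - G) ∘L Q‖ * 1 + 1 * ‖Q ∘L (P i - G)‖ := by
        gcongr
        · exact (ContinuousLinearMap.opNorm_comp_le _ _).trans
            (by gcongr; exact (hP i).opNorm_le_one (hm i))
        · exact (ContinuousLinearMap.opNorm_comp_le _ _).trans
            (by gcongr; exact hG.opNorm_le_one hn)
    _ ≤ 2 * ‖hQ.weight‖ * ‖(P i - G) hQ.weight‖ := by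
        linarith [hQ.opNorm_mul_comp_le hD, hQ.opNorm_comp_mul_le hD]

end IsDominatedIntegralOperator

/-- Pointwise almost everywhere convergence of bounded multipliers implies strong convergence of the
multiplication operators. -/
lemma tendsto_apply_of_tendsto_multiplier {ν : Measure ℝ} {ι : Type*} {l : Filter ι}
    [l.IsCountablyGenerated] {P : ι → Lp ℝ 2 ν →L[ℝ] Lp ℝ 2 ν} {m : ι → ℝ → ℝ}
    (hP : ∀ i, IsMultiplication (P i) (m i)) (hm : ∀ i a, |m i a| ≤ 1)
    {G : Lp ℝ 2 ν →L[ℝ] Lp ℝ 2 ν} {n : ℝ → ℝ} (hG : IsMultiplication G n) (hn : ∀ a, |n a| ≤ 1)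
    (h : ∀ᵐ a ∂ν, Filter.Tendsto (fun i => m i a) l (nhds (n a))) (f : Lp ℝ 2 ν) :
    Filter.Tendsto (fun i => P i f) l (nhds (G f)) := by
  rw [tendsto_iff_norm_sub_tendsto_zero]
  have hint : Integrable (fun a => (f : ℝ → ℝ) a ^ 2) ν := (Lp.memLp f).integrable_sq
  have key : Filter.Tendsto (fun i => ∫ a, ((P i f - G f : Lp ℝ 2 ν) : ℝ → ℝ) a ^ 2 ∂ν) l
      (nhds (∫ _, (0 : ℝ) ∂ν)) := by
    have hD : ∀ i, ∀ᵐ a ∂ν, ((P i f - G f : Lp ℝ 2 ν) : ℝ → ℝ) a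
        = (m i a - n a) * (f : ℝ → ℝ) a := fun i => ((hP i).sub hG) f
    have hDsq : ∀ i, (fun a => ((P i f - G f : Lp ℝ 2 ν) : ℝ → ℝ) a ^ 2)
        =ᵐ[ν] fun a => ((m i a - n a) * (f : ℝ → ℝ) a) ^ 2 := fun i => by
      filter_upwards [hD i] with a ha
      rw [ha]
    simp_rw [fun i => integral_congr_ae (hDsq i)]
    refine tendsto_integral_filter_of_dominated_convergence
      (fun a => 4 * (f : ℝ → ℝ) a ^ 2) (.of_forall fun i => ?_) (.of_forall fun i => ?_)
      (hint.const_mul 4) ?_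
    · exact ((Lp.aestronglyMeasurable _).pow 2).congr (hDsq i)
    · refine ae_of_all _ fun a => ?_
      rw [Real.norm_of_nonneg (sq_nonneg _), mul_pow]
      have h1 := abs_le.1 (hm i a)
      have h2 := abs_le.1 (hn a)
      gcongr
      nlinarith
    · filter_upwards [h] with a ha
      simpa using (((ha.sub_const (n a)).mul_const ((f : ℝ → ℝ) a)).pow 2)
  have h2 : Filter.Tendsto (fun i => √(∫ a, ((P i f - G f : Lp ℝ 2 ν) : ℝ → ℝ) a ^ 2 ∂ν)) l
      (nhds 0) := by
    simpa using key.sqrt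
  refine h2.congr fun i => ?_
  rw [← norm_sq_eq_integral_sq, Real.sqrt_sq (norm_nonneg _)]

namespace IsDominatedIntegralOperator

variable {ν : Measure ℝ} {Q : Lp ℝ 2 ν →L[ℝ] Lp ℝ 2 ν} {k : ℝ → ℝ → ℝ} {ψ : ℝ → ℝ}

lemma abs_apply_le_apply_abs (hQ : IsDominatedIntegralOperator ν Q k ψ) (f : Lp ℝ 2 ν) :
    ∀ᵐ a ∂ν, |(Q f : ℝ → ℝ) a| ≤ (Q |f| : ℝ → ℝ) a := by
  filter_upwards [hQ.apply_ae f, hQ.apply_ae |f|] with a h1 h2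
  rw [h1, h2, ← Real.norm_eq_abs]
  refine norm_integral_le_of_norm_le (hQ.integrable_kernel_mul a |f|) ?_
  filter_upwards [Lp.coeFn_abs f] with z hz
  rw [norm_mul, Real.norm_of_nonneg (hQ.kernel_pos a z).le, hz, Real.norm_eq_abs]

lemma norm_compression_pos [IsFiniteMeasure ν] (hQ : IsDominatedIntegralOperator ν Q k ψ)
    {P : Lp ℝ 2 ν →L[ℝ] Lp ℝ 2 ν} {B : Set ℝ} (hP : IsMultiplication P (B.indicator 1))
    (hB : MeasurableSet B) (hνB : ν B ≠ 0) : 0 < ‖P ∘L Q ∘L P‖ := by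
  rw [norm_pos_iff]
  intro h0
  set u : Lp ℝ 2 ν := indicatorConstLp 2 hB (measure_ne_top ν B) (1 : ℝ) with hu
  have hPu : (P u : ℝ → ℝ) =ᵐ[ν] B.indicator 1 := by
    filter_upwards [hP u, indicatorConstLp_coeFn (p := 2) (hs := hB)
      (hμs := measure_ne_top ν B) (c := (1 : ℝ))] with a h1 h2
    rw [h1, hu, h2]
    by_cases ha : a ∈ B <;> simp [ha]
  have hpos : ∀ᵐ a ∂ν, 0 < (Q (P u) : ℝ → ℝ) a := by
    filter_upwards [hQ.apply_ae (P u)] with a ha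
    rw [ha, integral_pos_iff_support_of_nonneg_ae _ (hQ.integrable_kernel_mul a (P u))]
    · refine (pos_iff_ne_zero.2 hνB).trans_le (measure_mono_ae ?_)
      filter_upwards [hPu] with z hz hzB
      change k a z * _ ≠ 0
      rw [hz, Set.indicator_of_mem hzB]
      simpa using (hQ.kernel_pos a z).ne'
    · filter_upwards [hPu] with z hz
      rw [hz]
      exact mul_nonneg (hQ.kernel_pos a z).le (Set.indicator_nonneg (by simp) z)
  have hzero : P (Q (P u)) = 0 := by
    simpa using congrArg (fun A : Lp ℝ 2 ν →L[ℝ] Lp ℝ 2 ν => A u) h0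
  refine hνB (measure_eq_zero_iff_ae_notMem.2 ?_)
  filter_upwards [hpos, hP (Q (P u)), Lp.coeFn_zero ℝ 2 ν] with a h1 h2 h3 haB
  rw [hzero, h3, Set.indicator_of_mem haB] at h2
  simp at h2
  exact h1.ne h2

/-- A quantitative positivity estimate: on a bounded interval, the image of a nonnegative function
is bounded below by its pairing with the truncated weight. -/
lemma exists_le_apply (hQ : IsDominatedIntegralOperator ν Q k ψ)
    {P : Lp ℝ 2 ν →L[ℝ] Lp ℝ 2 ν} {R : ℝ} (hP : IsMultiplication P ((Set.Ici R).indicator 1))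
    (h h' : ℝ) : ∃ c > 0, ∀ g : Lp ℝ 2 ν, (∀ᵐ z ∂ν, 0 ≤ (g : ℝ → ℝ) z) →
      (∀ᵐ z ∂ν, z < h' → (g : ℝ → ℝ) z = 0) →
      ∀ᵐ a ∂ν, a ∈ Set.Ico h h' →
        c * (inner ℝ hQ.weight g - inner ℝ (P hQ.weight) g) ≤ (Q g : ℝ → ℝ) a := by
  obtain ⟨c, hc, hmin⟩ := (isCompact_Icc.prod isCompact_Icc :
    IsCompact (Set.Icc h h' ×ˢ Set.Icc h' R)).exists_forall_le'
    (f := fun p : ℝ × ℝ => k p.1 p.2 / ψ p.2) (a := 0)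
    ((hQ.continuous_kernel.div (hQ.continuous_weight.comp continuous_snd)
      fun p => (hQ.weight_pos _).ne').continuousOn)
    (fun p _ => div_pos (hQ.kernel_pos _ _) (hQ.weight_pos _))
  refine ⟨c, hc, fun g hg0 hg => ?_⟩
  filter_upwards [hQ.apply_ae g] with a ha hah
  rw [ha, ← inner_sub_left, L2.inner_def, ← integral_const_mul]
  refine integral_mono_ae ((L2.integrable_inner _ _).const_mul c)
    (hQ.integrable_kernel_mul a g) ?_
  filter_upwards [hg0, hg, hQ.coeFn_weight, hP hQ.weight,
    Lp.coeFn_sub hQ.weight (P hQ.weight)] with z h0 h1 h2 h3 h4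
  simp only [h4, Pi.sub_apply, h3, h2, RCLike.inner_apply, conj_trivial]
  by_cases hzR : R ≤ z
  · simpa [Set.indicator_of_mem (Set.mem_Ici.2 hzR)] using
      mul_nonneg (hQ.kernel_pos a z).le h0
  by_cases hz : z < h'
  · simp [h1 hz]
  have hk := hmin (a, z) ⟨⟨hah.1, hah.2.le⟩, ⟨not_lt.1 hz, (not_le.1 hzR).le⟩⟩
  rw [le_div_iff₀ (hQ.weight_pos z)] at hk
  rw [Set.indicator_of_notMem (by simpa using hzR)]
  calc _ = c * ψ z * (g : ℝ → ℝ) z := by ring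
    _ ≤ _ := mul_le_mul_of_nonneg_right hk h0

lemma norm_compression_lt [IsFiniteMeasure ν] (hQ : IsDominatedIntegralOperator ν Q k ψ)
    {P : ℝ → Lp ℝ 2 ν →L[ℝ] Lp ℝ 2 ν}
    (hP : ∀ h, IsMultiplication (P h) ((Set.Ici h).indicator 1))
    (hlim : Filter.Tendsto (fun R => P R hQ.weight) Filter.atTop (nhds 0))
    {h h' : ℝ} (hh : h < h') (hpos : 0 < ‖P h' ∘L Q ∘L P h'‖) (hν : ν (Set.Ico h h') ≠ 0) :
    ‖P h' ∘L Q ∘L P h'‖ < ‖P h ∘L Q ∘L P h‖ := by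
  have hm : ∀ t a : ℝ, |(Set.Ici t).indicator (1 : ℝ → ℝ) a| ≤ 1 := fun t a => by
    by_cases hta : a ∈ Set.Ici t <;> simp [hta]
  set M := ‖P h ∘L Q ∘L P h‖ with hM
  set M' := ‖P h' ∘L Q ∘L P h'‖ with hM'
  set N := ‖hQ.weight‖ with hN
  have hN0 : 0 ≤ N := norm_nonneg _
  set η := M' / (4 * (N + 1)) with hη
  have hη0 : 0 < η := by positivity
  obtain ⟨R, hR⟩ : ∃ R, ‖P R hQ.weight‖ < η := by
    have := hlim.norm
    rw [norm_zero] at this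
    exact (this.eventually_lt_const hη0).exists
  obtain ⟨c, hc, hlow⟩ := hQ.exists_le_apply (hP R) h h'
  set C := (c * η) ^ 2 * ν.real (Set.Ico h h') with hC
  have hC0 : 0 < C := by
    have : 0 < ν.real (Set.Ico h h') := ENNReal.toReal_pos hν (measure_ne_top _ _)
    positivity
  have claim : ∀ f : Lp ℝ 2 ν, ‖f‖ ≤ 1 → M' / 2 ≤ ‖P h' (Q (P h' f))‖ →
      ‖P h' (Q (P h' f))‖ ^ 2 + C ≤ M ^ 2 := by
    intro f hf1 hf2
    set g := |P h' f| with hg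
    have hgn : ‖g‖ ≤ 1 := by
      rw [hg, norm_abs_Lp]
      exact ((hP h').norm_apply_le (hm h') f).trans hf1
    have hg0 : ∀ᵐ z ∂ν, 0 ≤ (g : ℝ → ℝ) z := by
      filter_upwards [Lp.coeFn_abs (P h' f)] with z hz
      rw [hg, hz]
      exact abs_nonneg _
    have hgz : ∀ᵐ z ∂ν, z < h' → (g : ℝ → ℝ) z = 0 := by
      filter_upwards [Lp.coeFn_abs (P h' f), hP h' f] with z hz hz' hlt
      rw [hg, hz, hz', Set.indicator_of_notMem (by simpa using hlt)]
      simp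
    have hPg : P h g = g := by
      refine Lp.ext ?_
      filter_upwards [hP h g, hgz] with z h1 h2
      rw [h1]
      by_cases hz : z < h'
      · simp [h2 hz]
      · rw [Set.indicator_of_mem (Set.mem_Ici.2 (hh.le.trans (not_lt.1 hz)))]
        simp
    have hle : ‖P h' (Q (P h' f))‖ ≤ ‖P h' (Q g)‖ := by
      refine Lp.norm_le_norm_of_ae_le ?_
      filter_upwards [hP h' (Q (P h' f)), hP h' (Q g), hQ.abs_apply_le_apply_abs (P h' f)]
        with a h1 h2 h3
      rw [h1, h2, norm_mul, norm_mul]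
      exact mul_le_mul_of_nonneg_left (h3.trans (le_abs_self _)) (norm_nonneg _)
    have hinner : 2 * η ≤ inner ℝ hQ.weight g := by
      have h1 : M' / 2 ≤ inner ℝ hQ.weight g * N := by
        have h2 := hQ.norm_apply_le g
        rw [show |g| = g from abs_abs _] at h2
        exact hf2.trans (hle.trans (((hP h').norm_apply_le (hm h') _).trans h2))
      have h0 : 0 ≤ inner ℝ hQ.weight g := hQ.inner_weight_abs_nonneg _
      rw [hη, show 2 * (M' / (4 * (N + 1))) = (M' / 2) / (N + 1) by field_simp; norm_num,
        div_le_iff₀ (by positivity)]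
      linarith
    have hinner' : η ≤ inner ℝ hQ.weight g - inner ℝ (P R hQ.weight) g := by
      have h1 := real_inner_le_norm (P R hQ.weight) g
      have h2 : ‖P R hQ.weight‖ * ‖g‖ ≤ η * 1 := by gcongr
      linarith
    have hpyth : ‖P h (Q g)‖ ^ 2 = ‖P h' (Q g)‖ ^ 2 + ‖(P h - P h') (Q g)‖ ^ 2 := by
      rw [norm_sq_eq_integral_sq, norm_sq_eq_integral_sq, norm_sq_eq_integral_sq,
        ← integral_add (Lp.memLp _).integrable_sq (Lp.memLp _).integrable_sq]
      refine integral_congr_ae ?_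
      filter_upwards [hP h (Q g), hP h' (Q g), ((hP h).sub (hP h')) (Q g)] with a h1 h2 h3
      rw [h1, h2, h3]
      by_cases ha : h' ≤ a
      · simp [ha, hh.le.trans ha]
      · simp [ha]
    have hgap : C ≤ ‖(P h - P h') (Q g)‖ ^ 2 := by
      rw [norm_sq_eq_integral_sq]
      have hCint : C = ∫ a, (Set.Ico h h').indicator (fun _ => (c * η) ^ 2) a ∂ν := by
        rw [integral_indicator_const _ measurableSet_Ico, smul_eq_mul, mul_comm]
      rw [hCint]
      refine integral_mono_ae ((integrable_const _).indicator measurableSet_Ico)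
        (Lp.memLp _).integrable_sq ?_
      filter_upwards [((hP h).sub (hP h')) (Q g), hlow g hg0 hgz] with a h1 h2
      by_cases ha : a ∈ Set.Ico h h'
      · rw [Set.indicator_of_mem ha, h1, Set.indicator_of_mem (Set.mem_Ici.2 ha.1),
          Set.indicator_of_notMem (by simpa using ha.2)]
        simp only [Pi.one_apply, sub_zero, one_mul]
        refine pow_le_pow_left₀ (by positivity) (le_trans ?_ (h2 ha)) 2
        gcongr
      · rw [Set.indicator_of_notMem ha]
        exact sq_nonneg _
    have htop : ‖P h (Q g)‖ ≤ M := by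
      have h1 := (P h ∘L Q ∘L P h).le_opNorm g
      simp only [ContinuousLinearMap.comp_apply, hPg] at h1
      exact h1.trans (mul_le_of_le_one_right (norm_nonneg _) hgn)
    calc _ ≤ ‖P h' (Q g)‖ ^ 2 + ‖(P h - P h') (Q g)‖ ^ 2 := by gcongr
      _ = ‖P h (Q g)‖ ^ 2 := hpyth.symm
      _ ≤ M ^ 2 := by gcongr
  set t := min (M' / 2) (C / (4 * M')) with ht
  have ht0 : 0 < t := lt_min (by positivity) (by positivity)
  have ht1 : t ≤ M' / 2 := min_le_left _ _
  have ht2 : t * (4 * M') ≤ C := (le_div_iff₀ (by positivity)).1 (min_le_right _ _)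
  obtain ⟨f, hf1, hf2⟩ := (P h' ∘L Q ∘L P h').exists_lt_apply_of_lt_opNorm
    (show M' - t < M' by linarith)
  simp only [ContinuousLinearMap.comp_apply] at hf2
  have h3 := claim f hf1.le (by linarith)
  have h4 : (M' - t) ^ 2 ≤ ‖P h' (Q (P h' f))‖ ^ 2 := by
    gcongr
    linarith
  exact lt_of_pow_lt_pow_left₀ 2 (norm_nonneg _) (by nlinarith)

end IsDominatedIntegralOperator

namespace Mehler

open Real

/-- The Mehler kernel with correlation `1 / S`, relative to the centred Gaussian measure of variance
`S / (S ^ 2 - 1)`. -/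
noncomputable def kernel (S a z : ℝ) : ℝ :=
  (√(1 - 1 / S ^ 2))⁻¹ * exp (a * z - (a ^ 2 + z ^ 2) / (2 * S))

/-- A square integrable function whose tensor square dominates the Mehler kernel. -/
noncomputable def weight (S a : ℝ) : ℝ :=
  √(√(1 - 1 / S ^ 2))⁻¹ * exp ((1 - 1 / S) * a ^ 2 / 2)

variable {S : ℝ}

lemma one_sub_pos (hS : 1 < S) : 0 < 1 - 1 / S ^ 2 := by
  rw [sub_pos, div_lt_one (by positivity)]
  nlinarith

lemma variance_pos (hS : 1 < S) : 0 < S / (S ^ 2 - 1) :=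
  div_pos (by linarith) (by nlinarith)

lemma toNNReal_variance_ne_zero (hS : 1 < S) : (S / (S ^ 2 - 1)).toNNReal ≠ 0 :=
  (Real.toNNReal_pos.2 (variance_pos hS)).ne'

lemma kernel_le (a z : ℝ) : kernel S a z ≤ weight S a * weight S z := by
  have hC : 0 ≤ (√(1 - 1 / S ^ 2))⁻¹ := by positivity
  calc kernel S a z
      ≤ (√(1 - 1 / S ^ 2))⁻¹ * exp ((1 - 1 / S) * a ^ 2 / 2 + (1 - 1 / S) * z ^ 2 / 2) := by
        unfold kernel
        gcongr
        have h : (a ^ 2 + z ^ 2) / (2 * S) = (1 / S) * a ^ 2 / 2 + (1 / S) * z ^ 2 / 2 := by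
          rw [← mul_div_mul_left _ _ (two_ne_zero' ℝ)]; ring
        rw [h]
        nlinarith [sq_nonneg (a - z)]
    _ = weight S a * weight S z := by
        unfold weight
        rw [exp_add, mul_mul_mul_comm, Real.mul_self_sqrt hC]

lemma gaussianPDFReal_eq_mul_kernel (hS : 1 < S) (a z : ℝ) :
    gaussianPDFReal (a / S) (1 / S).toNNReal z
      = gaussianPDFReal 0 (S / (S ^ 2 - 1)).toNNReal z * kernel S a z := by
  have hS0 : 0 < S := by linarith
  have hS1 : 0 < S ^ 2 - 1 := by nlinarith
  have hc : (√(2 * π * (1 / S)))⁻¹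
      = (√(2 * π * (S / (S ^ 2 - 1))))⁻¹ * (√(1 - 1 / S ^ 2))⁻¹ := by
    rw [← mul_inv, ← Real.sqrt_mul (by positivity)]
    congr 2
    field_simp
  unfold gaussianPDFReal kernel
  rw [Real.coe_toNNReal _ (by positivity), Real.coe_toNNReal _ (by positivity), hc,
    mul_mul_mul_comm, ← exp_add]
  congr 2
  field_simp
  ring

lemma map_gaussianReal (hS : 1 < S) (a : ℝ) :
    (gaussianReal 0 (S / (S ^ 2 - 1)).toNNReal).map (fun y => a / S + √(1 - 1 / S ^ 2) * y)
      = gaussianReal (a / S) (1 / S).toNNReal := by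
  have hS0 : 0 < S := by linarith
  have hS1 : 0 < S ^ 2 - 1 := by nlinarith
  have h : (fun y => a / S + √(1 - 1 / S ^ 2) * y)
      = (a / S + ·) ∘ (√(1 - 1 / S ^ 2) * ·) := rfl
  rw [h, ← Measure.map_map (by fun_prop) (by fun_prop), gaussianReal_map_const_mul,
    gaussianReal_map_const_add]
  congr 1
  · simp
  · ext
    rw [NNReal.coe_mul, NNReal.coe_mk, Real.sq_sqrt (one_sub_pos hS).le,
      Real.coe_toNNReal _ (by positivity), Real.coe_toNNReal _ (by positivity)]
    field_simp

lemma integral_eq_integral_kernel (hS : 1 < S) (f : ℝ → ℝ) (a : ℝ) :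
    ∫ y, f (a / S + √(1 - 1 / S ^ 2) * y) ∂(gaussianReal 0 (S / (S ^ 2 - 1)).toNNReal)
      = ∫ z, kernel S a z * f z ∂(gaussianReal 0 (S / (S ^ 2 - 1)).toNNReal) := by
  have hemb : MeasurableEmbedding fun y : ℝ => a / S + √(1 - 1 / S ^ 2) * y :=
    (measurableEmbedding_addLeft _).comp
      (measurableEmbedding_mulLeft₀ (Real.sqrt_pos.2 (one_sub_pos hS)).ne')
  have hw : (1 / S).toNNReal ≠ 0 := (Real.toNNReal_pos.2 (by positivity)).ne'
  rw [← hemb.integral_map, map_gaussianReal hS, integral_gaussianReal_eq_integral_smul hw,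
    integral_gaussianReal_eq_integral_smul (toNNReal_variance_ne_zero hS)]
  simp_rw [gaussianPDFReal_eq_mul_kernel hS, smul_eq_mul, mul_assoc]

lemma memLp_weight (hS : 1 < S) :
    MemLp (weight S) 2 (gaussianReal 0 (S / (S ^ 2 - 1)).toNNReal) := by
  have hS0 : 0 < S := by linarith
  have hS1 : 0 < S ^ 2 - 1 := by nlinarith
  have hmeas : Continuous (weight S) := by unfold weight; fun_prop
  rw [memLp_two_iff_integrable_sq hmeas.aestronglyMeasurable,
    gaussianReal_of_var_ne_zero _ (toNNReal_variance_ne_zero hS),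
    integrable_withDensity_iff_integrable_smul' (measurable_gaussianPDF _ _)
      (ae_of_all _ fun _ => gaussianPDF_lt_top)]
  have hb : 0 < (S - 1) ^ 2 / (2 * S) := by
    have : 0 < S - 1 := by linarith
    positivity
  refine ((integrable_exp_neg_mul_sq hb).const_mul
    ((√(2 * π * (S / (S ^ 2 - 1))))⁻¹ * √(√(1 - 1 / S ^ 2))⁻¹ ^ 2)).congr (ae_of_all _ fun z => ?_)
  simp only [toReal_gaussianPDF, smul_eq_mul, gaussianPDFReal, weight]
  rw [Real.coe_toNNReal _ (by positivity), mul_pow, ← exp_nat_mul, mul_mul_mul_comm, ← exp_add]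
  congr 2
  push_cast
  field_simp
  ring

lemma measurePreserving (hS : 1 < S) :
    MeasurePreserving (fun p : ℝ × ℝ => p.1 / S + √(1 - 1 / S ^ 2) * p.2)
      ((gaussianReal 0 (S / (S ^ 2 - 1)).toNNReal).prod
        (gaussianReal 0 (S / (S ^ 2 - 1)).toNNReal))
      (gaussianReal 0 (S / (S ^ 2 - 1)).toNNReal) := by
  refine ⟨by fun_prop, ?_⟩
  have hS0 : 0 < S := by linarith
  have hS1 : 0 < S ^ 2 - 1 := by nlinarith
  have h : (fun p : ℝ × ℝ => p.1 / S + √(1 - 1 / S ^ 2) * p.2)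
      = (fun p : ℝ × ℝ => p.1 + p.2) ∘ Prod.map (· / S) (√(1 - 1 / S ^ 2) * ·) := rfl
  rw [h, ← Measure.map_map (by fun_prop) (by fun_prop),
    ← Measure.map_prod_map _ _ (by fun_prop) (by fun_prop), gaussianReal_map_div_const,
    gaussianReal_map_const_mul]
  refine gaussianReal_conv_gaussianReal.trans ?_
  congr 1
  · simp
  · ext
    rw [NNReal.coe_add, NNReal.coe_div, NNReal.coe_mul, NNReal.coe_mk, NNReal.coe_mk,
      Real.sq_sqrt (one_sub_pos hS).le, Real.coe_toNNReal _ (by positivity)]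
    field_simp
    ring

/-- The square of a mean is at most the mean of the square. -/
lemma sq_integral_le_integral_sq {Ω : Type*} [MeasurableSpace Ω] {μ : Measure Ω}
    [IsProbabilityMeasure μ] {X : Ω → ℝ} (hX : MemLp X 2 μ) :
    (∫ ω, X ω ∂μ) ^ 2 ≤ ∫ ω, X ω ^ 2 ∂μ := by
  have h := variance_nonneg X μ
  rw [variance_eq_sub hX] at h
  simpa using h

variable {Q : Lp ℝ 2 (gaussianReal 0 (S / (S ^ 2 - 1)).toNNReal) →L[ℝ]
  Lp ℝ 2 (gaussianReal 0 (S / (S ^ 2 - 1)).toNNReal)}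

lemma isDominatedIntegralOperator (hS : 1 < S)
    (hQ : ∀ f, (Q f : ℝ → ℝ) =ᵐ[gaussianReal 0 (S / (S ^ 2 - 1)).toNNReal]
      fun a => ∫ y, (f : ℝ → ℝ) (a / S + √(1 - 1 / S ^ 2) * y)
        ∂(gaussianReal 0 (S / (S ^ 2 - 1)).toNNReal)) :
    IsDominatedIntegralOperator _ Q (kernel S) (weight S) where
  apply_ae f := by
    filter_upwards [hQ f] with a ha
    rw [ha, integral_eq_integral_kernel hS]
  continuous_kernel := by unfold kernel; fun_prop
  kernel_pos a z := mul_pos (inv_pos.2 (Real.sqrt_pos.2 (one_sub_pos hS))) (exp_pos _)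
  kernel_le := kernel_le
  continuous_weight := by unfold weight; fun_prop
  weight_pos a := mul_pos (Real.sqrt_pos.2 (inv_pos.2 (Real.sqrt_pos.2 (one_sub_pos hS))))
    (exp_pos _)
  memLp := memLp_weight hS

lemma norm_apply_le (hS : 1 < S)
    (hQ : ∀ f, (Q f : ℝ → ℝ) =ᵐ[gaussianReal 0 (S / (S ^ 2 - 1)).toNNReal]
      fun a => ∫ y, (f : ℝ → ℝ) (a / S + √(1 - 1 / S ^ 2) * y)
        ∂(gaussianReal 0 (S / (S ^ 2 - 1)).toNNReal))
    (f : Lp ℝ 2 (gaussianReal 0 (S / (S ^ 2 - 1)).toNNReal)) : ‖Q f‖ ≤ ‖f‖ := by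
  refine le_of_sq_le_sq ?_ (norm_nonneg _)
  have hT := measurePreserving hS
  have hf : Measurable (f : ℝ → ℝ) := (Lp.stronglyMeasurable f).measurable
  have hint : Integrable (fun z => (f : ℝ → ℝ) z ^ 2) (gaussianReal 0 (S / (S ^ 2 - 1)).toNNReal) :=
    (Lp.memLp f).integrable_sq
  have hF := hT.integrable_comp_of_integrable hint
  have hval : ∫ z, (f : ℝ → ℝ) z ^ 2 ∂(gaussianReal 0 (S / (S ^ 2 - 1)).toNNReal)
      = ∫ p : ℝ × ℝ, (f : ℝ → ℝ) (p.1 / S + √(1 - 1 / S ^ 2) * p.2) ^ 2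
        ∂((gaussianReal 0 (S / (S ^ 2 - 1)).toNNReal).prod
          (gaussianReal 0 (S / (S ^ 2 - 1)).toNNReal)) := by
    have h := integral_map (μ := (gaussianReal 0 (S / (S ^ 2 - 1)).toNNReal).prod
        (gaussianReal 0 (S / (S ^ 2 - 1)).toNNReal)) (f := fun z => (f : ℝ → ℝ) z ^ 2)
      hT.measurable.aemeasurable (hf.pow_const 2).aestronglyMeasurable
    simpa only [hT.map_eq] using h
  rw [norm_sq_eq_integral_sq, norm_sq_eq_integral_sq, hval]
  refine le_of_le_of_eq ?_ (integral_prod _ hF).symm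
  refine integral_mono_ae (Lp.memLp _).integrable_sq hF.integral_prod_left ?_
  filter_upwards [hQ f, hF.prod_right_ae] with a h1 h2
  rw [h1]
  refine sq_integral_le_integral_sq ((memLp_two_iff_integrable_sq ?_).2 h2)
  exact (hf.comp (by fun_prop)).aestronglyMeasurable

lemma opNorm_eq_one (hS : 1 < S)
    (hQ : ∀ f, (Q f : ℝ → ℝ) =ᵐ[gaussianReal 0 (S / (S ^ 2 - 1)).toNNReal]
      fun a => ∫ y, (f : ℝ → ℝ) (a / S + √(1 - 1 / S ^ 2) * y)
        ∂(gaussianReal 0 (S / (S ^ 2 - 1)).toNNReal)) : ‖Q‖ = 1 := by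
  refine le_antisymm (Q.opNorm_le_bound zero_le_one fun f => by
    simpa using norm_apply_le hS hQ f) ?_
  set u := Lp.const 2 (gaussianReal 0 (S / (S ^ 2 - 1)).toNNReal) (1 : ℝ) with hu
  have hQu : Q u = u := by
    refine Lp.ext ?_
    filter_upwards [(isDominatedIntegralOperator hS hQ).apply_ae u, Lp.coeFn_const
      (p := 2) (μ := gaussianReal 0 (S / (S ^ 2 - 1)).toNNReal) (1 : ℝ)] with a h1 h2
    have h3 : (fun z => kernel S a z * (u : ℝ → ℝ) z)
        =ᵐ[gaussianReal 0 (S / (S ^ 2 - 1)).toNNReal] fun z => kernel S a z * (fun _ => 1) z := by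
      filter_upwards [Lp.coeFn_const
        (p := 2) (μ := gaussianReal 0 (S / (S ^ 2 - 1)).toNNReal) (1 : ℝ)] with z hz
      rw [hu, hz]
      rfl
    rw [h1, integral_congr_ae h3, ← integral_eq_integral_kernel hS, hu, h2]
    simp
  have hu1 : ‖u‖ = 1 := by
    have h := Lp.norm_const' (p := 2) (μ := gaussianReal 0 (S / (S ^ 2 - 1)).toNNReal) (1 : ℝ)
      (by norm_num) (by norm_num)
    simpa using h
  simpa [hQu, hu1] using Q.le_opNorm u

end Mehler

/-- The function h ↦ λ_h = ‖π_h (dQ_{log d}) π_h‖ on L²(ν) is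
continuous on ℝ, tends to d as h → -∞ and to 0 as h → +∞; consequently it is a
decreasing homeomorphism from ℝ onto (0, d). -/
theorem stmt_10 (d : ℕ) (hd : 2 ≤ d)
    (ν : Measure ℝ) (hν : ν = gaussianReal 0 (Real.toNNReal ((d : ℝ) / ((d : ℝ) ^ 2 - 1))))
    (Q : Lp ℝ 2 ν →L[ℝ] Lp ℝ 2 ν)
    (hQ : ∀ f : Lp ℝ 2 ν, (Q f : ℝ → ℝ) =ᵐ[ν]
      fun a => ∫ y, (f : ℝ → ℝ) (a / d + Real.sqrt (1 - 1 / (d : ℝ) ^ 2) * y) ∂ν)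
    (Ph : ℝ → (Lp ℝ 2 ν →L[ℝ] Lp ℝ 2 ν))
    (hPh : ∀ (h : ℝ) (f : Lp ℝ 2 ν), (Ph h f : ℝ → ℝ) =ᵐ[ν]
      fun a => if h ≤ a then (f : ℝ → ℝ) a else 0)
    (lam : ℝ → ℝ) (hlam : ∀ h : ℝ, lam h = ‖Ph h ∘L ((d : ℝ) • Q) ∘L Ph h‖) :
    Continuous lam ∧
    Filter.Tendsto lam Filter.atBot (nhds (d : ℝ)) ∧
    Filter.Tendsto lam Filter.atTop (nhds 0) ∧
    StrictAnti lam ∧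
    Set.range lam = Set.Ioo 0 (d : ℝ) := by
  subst hν
  have hS : (1 : ℝ) < d := by exact_mod_cast hd
  have hd0 : (0 : ℝ) < d := by linarith
  have hv := Mehler.toNNReal_variance_ne_zero hS
  have hK := Mehler.isDominatedIntegralOperator hS hQ
  have := nullSingletonClass_gaussianReal (μ := 0) hv
  have hP : ∀ h, IsMultiplication (Ph h) ((Set.Ici h).indicator 1) := fun h f => by
    filter_upwards [hPh h f] with a ha
    rw [ha]
    by_cases hha : h ≤ a <;> simp [hha]
  have hm : ∀ t a : ℝ, |(Set.Ici t).indicator (1 : ℝ → ℝ) a| ≤ 1 := fun t a => by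
    by_cases hta : a ∈ Set.Ici t <;> simp [hta]
  have hmul : ∀ h, lam h = d * ‖Ph h ∘L Q ∘L Ph h‖ := fun h => by
    rw [hlam, ContinuousLinearMap.smul_comp, ContinuousLinearMap.comp_smul, norm_smul,
      Real.norm_of_nonneg hd0.le]
  have hν : ∀ s : Set ℝ, volume s ≠ 0 →
      gaussianReal 0 (Real.toNNReal ((d : ℝ) / ((d : ℝ) ^ 2 - 1))) s ≠ 0 := fun s hs h0 =>
    hs (gaussianReal_absolutelyContinuous' 0 hv h0)
  have hcont : Continuous lam := by
    rw [continuous_iff_continuousAt]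
    intro h₀
    have hstrong := tendsto_apply_of_tendsto_multiplier hP hm (hP h₀) (hm h₀) (l := nhds h₀)
      (by
        filter_upwards [compl_mem_ae_iff.2 (measure_singleton h₀)] with a ha
        rcases lt_or_gt_of_ne (show a ≠ h₀ from ha) with hlt | hlt
        · refine tendsto_const_nhds.congr' ?_
          filter_upwards [lt_mem_nhds hlt] with t ht
          simp [hlt, ht]
        · refine tendsto_const_nhds.congr' ?_
          filter_upwards [gt_mem_nhds hlt] with t ht
          simp [hlt.le, ht.le]) hK.weight
    have := (hK.tendsto_norm_compression hP hm (hP h₀) (hm h₀) hstrong).const_mul (d : ℝ)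
    simpa only [ContinuousAt, ← hmul] using this
  have hbot : Filter.Tendsto lam Filter.atBot (nhds (d : ℝ)) := by
    have hstrong := tendsto_apply_of_tendsto_multiplier hP hm .id (by simp) (l := Filter.atBot)
      (ae_of_all _ fun a => by
        refine tendsto_const_nhds.congr' ?_
        filter_upwards [Filter.eventually_le_atBot a] with t ht
        simp [ht]) hK.weight
    have := (hK.tendsto_norm_compression hP hm .id (by simp) hstrong).const_mul (d : ℝ)
    simp_rw [← hmul, ContinuousLinearMap.comp_id, ContinuousLinearMap.id_comp,
      Mehler.opNorm_eq_one hS hQ, mul_one] at this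
    exact this
  have htop0 : Filter.Tendsto (fun R => Ph R hK.weight) Filter.atTop (nhds 0) :=
    tendsto_apply_of_tendsto_multiplier hP hm .zero (by simp) (l := Filter.atTop)
      (ae_of_all _ fun a => by
        refine tendsto_const_nhds.congr' ?_
        filter_upwards [Filter.eventually_gt_atTop a] with t ht
        simp [ht]) hK.weight
  have htop : Filter.Tendsto lam Filter.atTop (nhds 0) := by
    have := (hK.tendsto_norm_compression hP hm .zero (by simp) htop0).const_mul (d : ℝ)
    simpa [← hmul] using this
  have hpos : ∀ h, 0 < ‖Ph h ∘L Q ∘L Ph h‖ := fun h =>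
    hK.norm_compression_pos (hP h) measurableSet_Ici (hν _ (by simp))
  have hanti : StrictAnti lam := fun h h' hh => by
    rw [hmul, hmul]
    exact mul_lt_mul_of_pos_left
      (hK.norm_compression_lt hP htop0 hh (hpos h') (hν _ (by simp [hh]))) hd0
  refine ⟨hcont, hbot, htop, hanti, Set.Subset.antisymm ?_ fun c hc => ?_⟩
  · rintro _ ⟨h, rfl⟩
    refine ⟨by rw [hmul]; exact mul_pos hd0 (hpos h), ?_⟩
    exact (hanti (sub_one_lt h)).trans_le (hanti.antitone.ge_of_tendsto hbot _)
  · exact mem_range_of_exists_le_of_exists_ge hcont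
      ((htop.eventually_lt_const hc.1).exists.imp fun _ => le_of_lt)
      ((hbot.eventually_const_lt hc.2).exists.imp fun _ => le_of_lt)
end
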